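/- arXiv:math/0702864 — 12 statements merged into one kernel-verified Lean document; each statement's English description precedes it below -/
import Mathlib

section
/- For all positive integers n and k, the diagonal action of the symmetric inverse semigroup IS_n on V^{⊗k} commutes with the action of the dual symmetric inverse semigroup I*_k on V^{⊗k}: for every σ ∈ IS_n, every α ∈ I*_k, and every basis vector v_i (i ∈ N^k), the operators of σ and α on V^{⊗k} commute. -/
/-!
Both composites are 0-1 matrices, and their `(l, i)` entries are indicators: since a rook matrix
has at most one nonzero entry in each row and column, each matrix product has at most one
nonzero term. The entry of `σ ∘ α` asks for a `j` such that the labelling `(i, j)` of `K ⊔ K'` is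
constant on the blocks of `α` and `σ` sends `j` to `l`; that of `α ∘ σ` asks for an `m` such that
`σ` sends `i` to `m` and `(m, l)` is constant on the blocks.
Every block meets both `K` and `K'`, so `σ` is defined on all labels occurring in `(i, j)` as soon
as it is defined on those of `j` (or of `i`). Applying `σ` to the labelling `(i, j)` then gives
`(m, l)`, and because `σ` is a partial injection one labelling is constant on blocks exactly when
the other is.
-/

open scoped BigOperators

/-- A rook matrix: entries in {0,1}, with at most one nonzero entry in each row
and in each column. -/
def IsRook {n : ℕ} (M : Matrix (Fin n) (Fin n) ℂ) : Prop :=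
  (∀ i j, M i j = 0 ∨ M i j = 1) ∧
  (∀ i j j', M i j ≠ 0 → M i j' ≠ 0 → j = j') ∧
  (∀ i i' j, M i j ≠ 0 → M i' j ≠ 0 → i = i')

/-- The symmetric inverse semigroup IS_n, realized as the monoid of n×n rook
matrices under matrix multiplication. -/
def RookMonoid (n : ℕ) := {M : Matrix (Fin n) (Fin n) ℂ // IsRook M}

/-- The k-fold tensor (Kronecker) power of a matrix: the operator induced on the
k-th tensor power of the space with basis indexed by `m`, identified with the
space of functions `(Fin k → m) → ℂ` via the basis v_i = e_{i 0} ⊗ ⋯ ⊗ e_{i (k-1)}. -/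
noncomputable def tpow (k : ℕ) {m : Type} [Fintype m] (M : Matrix m m ℂ) :
    Matrix (Fin k → m) (Fin k → m) ℂ :=
  Matrix.of fun l i => ∏ t : Fin k, M (l t) (i t)

/-- The dual symmetric inverse semigroup I*_k: partitions of
K̃ = {1,…,k} ⊔ {1',…,k'} (encoded as equivalence relations on `Fin k ⊕ Fin k`,
with `Sum.inl` the unprimed and `Sum.inr` the primed elements), each of whose
blocks intersects both K and K'. -/
structure DualSym (k : ℕ) where
  rel : Fin k ⊕ Fin k → Fin k ⊕ Fin k → Prop
  refl : ∀ x, rel x x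
  symm : ∀ {x y}, rel x y → rel y x
  trans : ∀ {x y z}, rel x y → rel y z → rel x z
  meetsL : ∀ x, ∃ a, rel x (Sum.inl a)
  meetsR : ∀ x, ∃ b, rel x (Sum.inr b)

open Classical in
/-- The operator on V^{⊗k} attached to α ∈ I*_k: the (l,i) entry is 1 iff the
labelling of K̃ given by i on K and l on K' is constant on the blocks of α
(so that α(v_i) = v_l when such l exists, and α(v_i) = 0 otherwise). -/
noncomputable def dualOp (n k : ℕ) (α : DualSym k) :
    Matrix (Fin k → Fin n) (Fin k → Fin n) ℂ :=
  Matrix.of fun l i =>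
    if ∀ x y, α.rel x y → Sum.elim i l x = Sum.elim i l y then 1 else 0

open Classical in
/-- A tensor power of a 0-1 matrix is the indicator of all its factors being nonzero. -/
lemma tpow_apply_eq_ite (k : ℕ) {m : Type} [Fintype m] (M : Matrix m m ℂ)
    (h01 : ∀ i j, M i j = 0 ∨ M i j = 1) (l i : Fin k → m) :
    tpow k M l i = if ∀ t, M (l t) (i t) ≠ 0 then 1 else 0 := by
  simp only [tpow, Matrix.of_apply]
  split_ifs with h
  · exact Finset.prod_eq_one fun t _ => (h01 _ _).resolve_left (h t)
  · push Not at h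
    obtain ⟨t, ht⟩ := h
    exact Finset.prod_eq_zero (Finset.mem_univ t) ht

open Classical in
lemma sum_indicator_of_subsingleton {ι : Type} [Fintype ι] (p : ι → Prop) [DecidablePred p]
    (hp : ∀ x y, p x → p y → x = y) :
    (∑ x, if p x then (1 : ℂ) else 0) = if ∃ x, p x then 1 else 0 := by
  split_ifs with h
  · obtain ⟨x, hx⟩ := h
    rw [Finset.sum_eq_single x (fun y _ hyx => if_neg fun hy => hyx (hp y x hy hx))
      (fun hx' => absurd (Finset.mem_univ x) hx'), if_pos hx]
  · exact Finset.sum_eq_zero fun x _ => if_neg fun hx => h ⟨x, hx⟩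

/-- Schur-Weyl duality, part (i): the diagonal action of IS_n on V^{⊗k} commutes
with the action of the dual symmetric inverse semigroup I*_k. -/
theorem isn_dualSym_actions_commute (n k : ℕ) (hn : 0 < n) (hk : 0 < k)
    (σ : RookMonoid n) (α : DualSym k) :
    tpow k σ.val * dualOp n k α = dualOp n k α * tpow k σ.val := by
  classical
  obtain ⟨M, h01, hrow, hcol⟩ := σ
  ext l i
  simp only [Matrix.mul_apply, dualOp, Matrix.of_apply,
    tpow_apply_eq_ite k M h01, ← ite_and, ite_mul, one_mul, zero_mul]
  rw [sum_indicator_of_subsingleton, sum_indicator_of_subsingleton]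
  · congr 1
    refine propext ⟨?_, ?_⟩
    · rintro ⟨j, hlj, hij⟩
      -- Transport the labels `l` back to the unprimed points through the blocks of `α`.
      choose b hb using fun a : Fin k => α.meetsR (Sum.inl a)
      have hm : ∀ x, M (Sum.elim (fun a => l (b a)) l x) (Sum.elim i j x) ≠ 0 := by
        rintro (a | c)
        · have h : i a = j (b a) := hij _ _ (hb a)
          simpa [h] using hlj (b a)
        · exact hlj c
      refine ⟨fun a => l (b a), fun x y hxy => ?_, fun a => hm (Sum.inl a)⟩
      have hy := hm y
      rw [← hij x y hxy] at hy
      exact hcol _ _ _ (hm x) hy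
    · rintro ⟨m, hml, hmi⟩
      -- Transport the labels `i` to the primed points through the blocks of `α`.
      choose a ha using fun c : Fin k => α.meetsL (Sum.inr c)
      have hj : ∀ x, M (Sum.elim m l x) (Sum.elim i (fun c => i (a c)) x) ≠ 0 := by
        rintro (c | c)
        · exact hmi c
        · have h : l c = m (a c) := hml _ _ (ha c)
          simpa [h] using hmi (a c)
      refine ⟨fun c => i (a c), fun c => hj (Sum.inr c), fun x y hxy => ?_⟩
      have hy := hj y
      rw [← hml x y hxy] at hy
      exact hrow _ _ _ (hj x) hy
  · exact fun m m' h h' => funext fun t => hcol _ _ _ (h.2 t) (h'.2 t)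
  · exact fun j j' h h' => funext fun t => hrow _ _ _ (h.1 t) (h'.1 t)
end

section
/- For all positive integers n and k, the centralizer algebra End_{IS_n}(V^{⊗k}) — the set of all ℂ-linear endomorphisms of V^{⊗k} commuting with the action of every element of IS_n — equals the ℂ-linear span of the operators on V^{⊗k} given by the elements of the dual symmetric inverse semigroup I*_k (i.e., the image of the semigroup algebra ℂ[I*_k]). -/
/-!
Write the `(l, i)` entry of a matrix on `V^{⊗k}` as a function of the labelling of `K̃` given by
`i` on `K` and `l` on `K'`. Commuting with the partial identities of `IS_n` forces an entry to
vanish unless `l` and `i` take the same set of values (`range_eq_of_ne_zero`), that is, unless the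
kernel of the labelling lies in `I*_k`. Commuting with the permutation matrices forces the entry
to depend only on that kernel (`apply_perm_comp`, `exists_perm_comp_eq`). Hence a centralizing
matrix is a combination of the orbit matrices `orbitOp α`, the indicators of the labellings with
kernel exactly `α` (`exists_eq_sum_orbitOp`).

The operator `dualOp α` is the sum of `orbitOp β` over all `β` coarser than or equal to `α`, a
unitriangular system, so the orbit matrices lie in the span of the operators of `I*_k`
(`orbitOp_mem_span`). The converse inclusion is a direct comparison of entries
(`dualOp_mul_tpow`).
-/

open scoped BigOperators

/-! ### Operators of `I*_k` commute with the rook monoid -/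

open Classical in
theorem tpow_apply_of_isRook {n k : ℕ} {M : Matrix (Fin n) (Fin n) ℂ} (hM : IsRook M)
    (l i : Fin k → Fin n) :
    tpow k M l i = if ∀ t, M (l t) (i t) ≠ 0 then 1 else 0 := by
  simp only [tpow, Matrix.of_apply]
  split_ifs with h
  · exact Finset.prod_eq_one fun t _ => (hM.1 _ _).resolve_left (h t)
  · push Not at h
    obtain ⟨t, ht⟩ := h
    exact Finset.prod_eq_zero (Finset.mem_univ t) ht

theorem sum_ite_eq_ite_exists {ι : Type*} [Fintype ι] (p : ι → Prop) [DecidablePred p]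
    [Decidable (∃ a, p a)]
    (hp : ∀ a b, p a → p b → a = b) :
    ∑ a, (if p a then (1 : ℂ) else 0) = if ∃ a, p a then 1 else 0 := by
  split_ifs with h
  · obtain ⟨a, ha⟩ := h
    rw [Finset.sum_eq_single a _ (by simp), if_pos ha]
    intro b _ hb
    exact if_neg fun h' => hb (hp _ _ h' ha)
  · push Not at h
    exact Finset.sum_eq_zero fun a _ => if_neg (h a)

/-- Both products have `(l, i)` entry `1` or `0` according to whether a (unique) intermediate
multi-index exists. Since every block of `α` meets `K` and `K'`, an intermediate index for one
product determines one for the other; constancy on blocks is carried over because `M` is a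
partial map and is injective. -/
theorem dualOp_mul_tpow {n k : ℕ} (α : DualSym k) {M : Matrix (Fin n) (Fin n) ℂ}
    (hM : IsRook M) : dualOp n k α * tpow k M = tpow k M * dualOp n k α := by
  classical
  ext l i
  simp only [Matrix.mul_apply, tpow_apply_of_isRook hM, dualOp, Matrix.of_apply,
    ← ite_and, mul_ite, mul_one, mul_zero]
  refine (sum_ite_eq_ite_exists _ ?_).trans
    ((if_congr ?_ rfl rfl).trans (sum_ite_eq_ite_exists _ ?_).symm)
  rotate_left
  · constructor
    · rintro ⟨m, hm, hc⟩
      choose a ha using fun b : Fin k => α.meetsL (Sum.inr b)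
      have key : ∀ x, M (Sum.elim m l x) (Sum.elim i (fun b => i (a b)) x) ≠ 0 := by
        rintro (x | b)
        · exact hm x
        · have := hc _ _ (ha b)
          simp only [Sum.elim_inl, Sum.elim_inr] at this ⊢
          rw [this]
          exact hm _
      refine ⟨fun b => i (a b), fun x y hxy => ?_, fun b => key (Sum.inr b)⟩
      have hx := key x
      rw [hc x y hxy] at hx
      exact hM.2.1 _ _ _ hx (key y)
    · rintro ⟨m, hc, hm⟩
      choose b hb using fun a : Fin k => α.meetsR (Sum.inl a)
      have key : ∀ x, M (Sum.elim (fun a => l (b a)) l x) (Sum.elim i m x) ≠ 0 := by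
        rintro (a | x)
        · have := hc _ _ (hb a)
          simp only [Sum.elim_inl, Sum.elim_inr] at this ⊢
          rw [this]
          exact hm _
        · exact hm x
      refine ⟨fun a => l (b a), fun a => key (Sum.inl a), fun x y hxy => ?_⟩
      have hx := key x
      rw [hc x y hxy] at hx
      exact hM.2.2 _ _ _ hx (key y)
  · rintro m m' ⟨_, h⟩ ⟨_, h'⟩
    exact funext fun t => hM.2.1 _ _ _ (h t) (h' t)
  · rintro m m' ⟨h, _⟩ ⟨h', _⟩
    exact funext fun t => hM.2.2 _ _ _ (h t) (h' t)

/-! ### Constraints on the entries of a centralizing matrix -/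

open Classical in
/-- The diagonal rook matrix of the partial identity on `S`. -/
noncomputable def idemRook (n : ℕ) (S : Set (Fin n)) : RookMonoid n :=
  ⟨Matrix.of fun a b => if a = b ∧ a ∈ S then 1 else 0, by
    refine ⟨fun i j => ?_, fun i j j' h h' => ?_, fun i i' j h h' => ?_⟩
    · simp only [Matrix.of_apply]
      split_ifs <;> simp
    · simp only [Matrix.of_apply, ne_eq, ite_eq_right_iff, one_ne_zero, imp_false, not_not] at h h'
      exact h.1.symm.trans h'.1
    · simp only [Matrix.of_apply, ne_eq, ite_eq_right_iff, one_ne_zero, imp_false, not_not] at h h'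
      exact h.1.trans h'.1.symm⟩

open Classical in
/-- The permutation matrix sending `e_b` to `e_{π b}`. -/
noncomputable def permRook (n : ℕ) (π : Equiv.Perm (Fin n)) : RookMonoid n :=
  ⟨Matrix.of fun a b => if a = π b then 1 else 0, by
    refine ⟨fun i j => ?_, fun i j j' h h' => ?_, fun i i' j h h' => ?_⟩
    · simp only [Matrix.of_apply]
      split_ifs <;> simp
    · simp only [Matrix.of_apply, ne_eq, ite_eq_right_iff, one_ne_zero, imp_false, not_not] at h h'
      exact π.injective (h.symm.trans h')
    · simp only [Matrix.of_apply, ne_eq, ite_eq_right_iff, one_ne_zero, imp_false, not_not] at h h'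
      exact h.trans h'.symm⟩

open Classical in
theorem tpow_idemRook (n k : ℕ) (S : Set (Fin n)) (l i : Fin k → Fin n) :
    tpow k (idemRook n S).val l i = if l = i ∧ ∀ t, l t ∈ S then 1 else 0 := by
  rw [tpow_apply_of_isRook (idemRook n S).2]
  simp [idemRook, forall_and, funext_iff]

open Classical in
theorem tpow_permRook (n k : ℕ) (π : Equiv.Perm (Fin n)) (l i : Fin k → Fin n) :
    tpow k (permRook n π).val l i = if l = π ∘ i then 1 else 0 := by
  rw [tpow_apply_of_isRook (permRook n π).2]
  simp [permRook, funext_iff]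

theorem range_eq_of_ne_zero {n k : ℕ} {A : Matrix (Fin k → Fin n) (Fin k → Fin n) ℂ}
    (hA : ∀ σ : RookMonoid n, A * tpow k σ.val = tpow k σ.val * A) {l i : Fin k → Fin n}
    (h : A l i ≠ 0) : Set.range l = Set.range i := by
  classical
  have key (S : Set (Fin n)) : (∀ t, i t ∈ S) ↔ (∀ t, l t ∈ S) := by
    have e := congrFun (congrFun (hA (idemRook n S)) l) i
    simp only [Matrix.mul_apply, tpow_idemRook, ite_and, mul_ite, ite_mul, mul_one, mul_zero,
      one_mul, zero_mul, Finset.sum_ite_eq, Finset.sum_ite_eq', Finset.mem_univ, if_true] at e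
    by_cases h1 : ∀ t, i t ∈ S <;> by_cases h2 : ∀ t, l t ∈ S
    · exact iff_of_true h1 h2
    · rw [if_pos h1, if_neg h2] at e
      exact absurd e h
    · rw [if_neg h1, if_pos h2] at e
      exact absurd e.symm h
    · exact iff_of_false h1 h2
  apply Set.Subset.antisymm
  · rintro _ ⟨t, rfl⟩
    exact (key (Set.range i)).1 (fun t => ⟨t, rfl⟩) t
  · rintro _ ⟨t, rfl⟩
    exact (key (Set.range l)).2 (fun t => ⟨t, rfl⟩) t

theorem apply_perm_comp {n k : ℕ} {A : Matrix (Fin k → Fin n) (Fin k → Fin n) ℂ}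
    (hA : ∀ σ : RookMonoid n, A * tpow k σ.val = tpow k σ.val * A) (π : Equiv.Perm (Fin n))
    (l i : Fin k → Fin n) : A (π ∘ l) (π ∘ i) = A l i := by
  classical
  have e := congrFun (congrFun (hA (permRook n π)) (π ∘ l)) i
  have hc (m : Fin k → Fin n) : π ∘ l = π ∘ m ↔ l = m := π.injective.comp_left.eq_iff
  simpa [Matrix.mul_apply, tpow_permRook, hc] using e

/-- Two labellings by `Fin n` with the same kernel differ by a permutation of `Fin n`. -/
theorem exists_perm_comp_eq {n : ℕ} {X : Type*} (f g : X → Fin n)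
    (h : ∀ x y, f x = f y ↔ g x = g y) : ∃ π : Equiv.Perm (Fin n), π ∘ f = g := by
  classical
  let F : Set.range f → Set.range g := fun a => ⟨g a.2.choose, _, rfl⟩
  have hF (x : X) : F ⟨f x, x, rfl⟩ = ⟨g x, x, rfl⟩ :=
    Subtype.ext ((h _ _).1 (Exists.choose_spec (⟨x, rfl⟩ : ∃ y, f y = f x)))
  have hbij : Function.Bijective F := by
    constructor
    · rintro ⟨_, x, rfl⟩ ⟨_, y, rfl⟩ hxy
      rw [hF, hF] at hxy
      exact Subtype.ext ((h _ _).2 (congrArg Subtype.val hxy))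
    · rintro ⟨_, x, rfl⟩
      exact ⟨_, hF x⟩
  let e : {a // a ∈ Set.range f} ≃ {a // a ∈ Set.range g} := Equiv.ofBijective F hbij
  refine ⟨e.extendSubtype, funext fun x => ?_⟩
  rw [Function.comp_apply, Equiv.extendSubtype_apply_of_mem e (f x) ⟨x, rfl⟩]
  exact congrArg Subtype.val (hF x)

/-! ### The orbit basis -/

theorem DualSym.rel_injective (k : ℕ) : Function.Injective (DualSym.rel (k := k)) := by
  rintro ⟨⟩ ⟨⟩ h
  cases h
  rfl

instance (k : ℕ) : Finite (DualSym k) := Finite.of_injective _ (DualSym.rel_injective k)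

noncomputable instance (k : ℕ) : Fintype (DualSym k) := Fintype.ofFinite _

/-- The kernel of the labelling of `K̃` given by `i` on `K` and `l` on `K'`. -/
def kerRel {n k : ℕ} (l i : Fin k → Fin n) (x y : Fin k ⊕ Fin k) : Prop :=
  Sum.elim i l x = Sum.elim i l y

/-- When `l` and `i` have the same values, the kernel of the labelling is an element of `I*_k`. -/
def kerDual {n k : ℕ} (l i : Fin k → Fin n) (h : Set.range l = Set.range i) : DualSym k where
  rel := kerRel l i
  refl _ := rfl
  symm h := Eq.symm h
  trans h h' := Eq.trans h h'
  meetsL := by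
    rintro (a | b)
    · exact ⟨a, rfl⟩
    · obtain ⟨a, ha⟩ : l b ∈ Set.range i := h ▸ ⟨b, rfl⟩
      exact ⟨a, ha.symm⟩
  meetsR := by
    rintro (a | b)
    · obtain ⟨b, hb⟩ : i a ∈ Set.range l := h ▸ ⟨a, rfl⟩
      exact ⟨b, hb.symm⟩
    · exact ⟨b, rfl⟩

theorem range_eq_of_le_kerRel {n k : ℕ} (α : DualSym k) {l i : Fin k → Fin n}
    (h : α.rel ≤ kerRel l i) : Set.range l = Set.range i := by
  apply Set.Subset.antisymm
  · rintro _ ⟨b, rfl⟩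
    obtain ⟨a, ha⟩ := α.meetsL (Sum.inr b)
    exact ⟨a, (h _ _ ha).symm⟩
  · rintro _ ⟨a, rfl⟩
    obtain ⟨b, hb⟩ := α.meetsR (Sum.inl a)
    exact ⟨b, (h _ _ hb).symm⟩

open Classical in
/-- The orbit matrix of `α`: the `(l, i)` entry is `1` iff the labelling of `K̃` by `i` and `l`
has kernel exactly `α`. -/
noncomputable def orbitOp (n k : ℕ) (α : DualSym k) :
    Matrix (Fin k → Fin n) (Fin k → Fin n) ℂ :=
  Matrix.of fun l i => if α.rel = kerRel l i then 1 else 0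

open Classical in
/-- At a given entry, at most one `β` contributes to a combination of orbit matrices. -/
theorem sum_smul_orbitOp_apply {n k : ℕ} (c : DualSym k → ℂ) (l i : Fin k → Fin n) :
    (∑ β, c β • orbitOp n k β) l i =
      if h : Set.range l = Set.range i then c (kerDual l i h) else 0 := by
  simp only [Matrix.sum_apply, Matrix.smul_apply, orbitOp, Matrix.of_apply, smul_eq_mul,
    mul_ite, mul_one, mul_zero]
  split_ifs with h
  · rw [Finset.sum_eq_single (kerDual l i h) _ (by simp)]
    · exact if_pos rfl
    intro β _ hβ
    exact if_neg fun e => hβ (DualSym.rel_injective k e)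
  · exact Finset.sum_eq_zero fun β _ => if_neg fun e => h (range_eq_of_le_kerRel β e.le)

open Classical in
theorem dualOp_eq_sum_orbitOp (n k : ℕ) (α : DualSym k) :
    dualOp n k α = ∑ β : DualSym k, (if α.rel ≤ β.rel then (1 : ℂ) else 0) • orbitOp n k β := by
  ext l i
  rw [sum_smul_orbitOp_apply]
  have e : dualOp n k α l i = if α.rel ≤ kerRel l i then 1 else 0 :=
    if_congr Iff.rfl rfl rfl
  rw [e]
  by_cases h : Set.range l = Set.range i
  · rw [dif_pos h]
    rfl
  · rw [dif_neg h, if_neg fun h' => h (range_eq_of_le_kerRel α h')]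

/-- The expansion of `dualOp` in orbit matrices is unitriangular for the coarsening order, so it
can be inverted by induction from the coarsest partitions down. -/
theorem orbitOp_mem_span (n k : ℕ) (α : DualSym k) :
    orbitOp n k α ∈ Submodule.span ℂ (Set.range (dualOp n k)) := by
  classical
  have wf : WellFounded (InvImage (· > ·) (DualSym.rel (k := k))) :=
    InvImage.wf _ wellFounded_gt
  induction α using wf.induction with
  | _ α ih =>
    have h := dualOp_eq_sum_orbitOp n k α
    rw [← Finset.add_sum_erase _ _ (Finset.mem_univ α), if_pos le_rfl, one_smul] at h
    rw [eq_sub_of_add_eq h.symm]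
    refine Submodule.sub_mem _ (Submodule.subset_span ⟨α, rfl⟩)
      (Submodule.sum_mem _ fun β hβ => ?_)
    split_ifs with hle
    · refine Submodule.smul_mem _ _ (ih β (lt_of_le_of_ne hle fun e => ?_))
      exact (Finset.ne_of_mem_erase hβ) (DualSym.rel_injective k e.symm)
    · simp

/-- The coefficient of `orbitOp α` is the value of `A` at any entry whose kernel is `α`; it is
well defined because all such entries are related by permutations of `Fin n`. -/
theorem exists_eq_sum_orbitOp {n k : ℕ} {A : Matrix (Fin k → Fin n) (Fin k → Fin n) ℂ}
    (hA : ∀ σ : RookMonoid n, A * tpow k σ.val = tpow k σ.val * A) :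
    ∃ c : DualSym k → ℂ, A = ∑ α, c α • orbitOp n k α := by
  classical
  have hc (α : DualSym k) : ∃ z : ℂ, ∀ l i, α.rel = kerRel l i → A l i = z := by
    by_cases hex : ∃ l i : Fin k → Fin n, α.rel = kerRel l i
    · obtain ⟨l₀, i₀, h₀⟩ := hex
      refine ⟨A l₀ i₀, fun l i h => ?_⟩
      obtain ⟨π, hπ⟩ := exists_perm_comp_eq (Sum.elim i₀ l₀) (Sum.elim i l) fun x y =>
        iff_of_eq (congrFun (congrFun (h₀.symm.trans h) x) y)
      have hi : π ∘ i₀ = i := funext fun t => congrFun hπ (Sum.inl t)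
      have hl : π ∘ l₀ = l := funext fun t => congrFun hπ (Sum.inr t)
      rw [← hi, ← hl, apply_perm_comp hA]
    · exact ⟨0, fun l i h => absurd ⟨l, i, h⟩ hex⟩
  choose c hc using hc
  refine ⟨c, ?_⟩
  ext l i
  rw [sum_smul_orbitOp_apply]
  split_ifs with h
  · exact hc _ l i rfl
  · by_contra h'
    exact h (range_eq_of_ne_zero hA h')

/-- Schur-Weyl duality, part (ii): the centralizer of the IS_n-action on V^{⊗k}
is exactly the linear span of the operators coming from I*_k. -/
theorem end_isn_eq_span_dualSym (n k : ℕ) (hn : 0 < n) (hk : 0 < k) :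
    {A : Matrix (Fin k → Fin n) (Fin k → Fin n) ℂ |
        ∀ σ : RookMonoid n, A * tpow k σ.val = tpow k σ.val * A} =
      (Submodule.span ℂ (Set.range (dualOp n k)) : Set _) := by
  ext A
  simp only [Set.mem_ofPred_eq, SetLike.mem_coe]
  constructor
  · intro hA
    obtain ⟨c, rfl⟩ := exists_eq_sum_orbitOp hA
    exact Submodule.sum_mem _ fun α _ => Submodule.smul_mem _ _ (orbitOp_mem_span n k α)
  · intro hA σ
    induction hA using Submodule.span_induction with
    | mem B hB =>
      obtain ⟨α, rfl⟩ := hB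
      exact dualOp_mul_tpow α σ.2
    | zero => simp
    | add B C _ _ hB hC => rw [add_mul, mul_add, hB, hC]
    | smul z B _ hB => rw [Matrix.smul_mul, Matrix.mul_smul, hB]
end

section
/- For all positive integers n and k, the representation of the contracted semigroup algebra of IS_n on V^{⊗k} is faithful if and only if k ≥ n; concretely, the zero element of IS_n (the empty partial map, i.e. the zero rook matrix) acts as the zero operator on V^{⊗k}, and the family of operators on V^{⊗k} induced by the nonzero elements of IS_n is linearly independent over ℂ if and only if k ≥ n. -/
/-!
The `(l, i)` entry of `tpow k M` is `∏ t, M (l t) (i t)`. For a rook matrix `σ` it is `1` if all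
the positions `(l t, i t)` lie in the support of `σ`, and `0` otherwise.

If `n ≤ k`, a nonzero `τ` has between `1` and `n ≤ k` support positions, so some pair `(l, i)`
lists exactly these positions, and the corresponding entry of `tpow k σ` is `1` iff
`supp τ ⊆ supp σ`. Applied to a linear relation and a `τ` of maximal rank among the elements
with nonzero coefficient, this entry isolates the coefficient of `τ`, which must therefore vanish.

If `k < n`, the diagonal idempotents `ε_S` satisfy `∑_S (-1)^|S| tpow k ε_S = 0`: in row `l` the tuple `l`
misses some point `a`, and the terms of `S` and `insert a S` cancel
(`sum_neg_one_pow_tpow_diagIdem`). The term of `S = ∅` vanishes as `k > 0`, so this is a nontrivial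
relation among nonzero elements of the monoid.
-/

open scoped BigOperators

/-- The zero element of IS_n: the zero rook matrix (the empty partial map). -/
def rookZero (n : ℕ) : RookMonoid n :=
  ⟨0, ⟨fun _ _ => Or.inl rfl, fun _ _ _ h _ => absurd rfl h, fun _ _ _ h _ => absurd rfl h⟩⟩


/-- The set of positions of the nonzero entries of a matrix, that is, the graph of the partial
injection when the matrix is a rook matrix; the target index comes first. -/
noncomputable def rookSupp {n : ℕ} (M : Matrix (Fin n) (Fin n) ℂ) : Finset (Fin n × Fin n) :=
  Finset.univ.filter fun p => M p.1 p.2 ≠ 0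

lemma mem_rookSupp {n : ℕ} {M : Matrix (Fin n) (Fin n) ℂ} {p : Fin n × Fin n} :
    p ∈ rookSupp M ↔ M p.1 p.2 ≠ 0 := by
  simp [rookSupp]

lemma card_rookSupp_le {n : ℕ} {M : Matrix (Fin n) (Fin n) ℂ} (hM : IsRook M) :
    (rookSupp M).card ≤ n := by
  have h := Finset.card_le_card_of_injOn (s := rookSupp M) (t := Finset.univ) Prod.fst
    (fun _ _ => Finset.mem_coe.2 (Finset.mem_univ _)) (by
      rintro ⟨a, b⟩ hp ⟨a', b'⟩ hq (rfl : a = a')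
      rw [Finset.mem_coe, mem_rookSupp] at hp hq
      rw [hM.2.1 a b b' hp hq])
  simpa using h

lemma rookSupp_injective {n : ℕ} {σ τ : RookMonoid n}
    (h : rookSupp σ.val = rookSupp τ.val) : σ = τ := by
  apply Subtype.ext
  ext a b
  have hab : σ.val a b ≠ 0 ↔ τ.val a b ≠ 0 := by
    simpa [mem_rookSupp] using Finset.ext_iff.1 h (a, b)
  rcases σ.property.1 a b with h1 | h1 <;> rcases τ.property.1 a b with h2 | h2 <;>
    simp_all

lemma rookSupp_nonempty {n : ℕ} {σ : RookMonoid n} (h : σ ≠ rookZero n) :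
    (rookSupp σ.val).Nonempty := by
  by_contra hne
  apply h
  apply rookSupp_injective
  rw [Finset.not_nonempty_iff_eq_empty.1 hne]
  simp [rookSupp, rookZero]

/-- A nonempty finite set with at most `k` elements is the range of a `k`-tuple. -/
lemma exists_tuple_range {α : Type*} {k : ℕ} (s : Finset α) (hs : s.Nonempty) (hk : s.card ≤ k) :
    ∃ p : Fin k → α, ∀ x, x ∈ s ↔ ∃ t, p t = x := by
  classical
  have : Nonempty s := hs.to_subtype
  obtain ⟨e⟩ : Nonempty (s ↪ Fin k) :=
    Function.Embedding.nonempty_of_card_le (by simpa using hk)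
  refine ⟨fun t => (Function.invFun e t : s), fun x => ⟨fun hx => ⟨e ⟨x, hx⟩, ?_⟩, ?_⟩⟩
  · exact congrArg Subtype.val (Function.leftInverse_invFun e.injective ⟨x, hx⟩)
  · rintro ⟨t, rfl⟩
    exact (Function.invFun e t).2

lemma tpow_apply {n k : ℕ} (M : Matrix (Fin n) (Fin n) ℂ) (l i : Fin k → Fin n) :
    tpow k M l i = ∏ t, M (l t) (i t) :=
  rfl

lemma linearIndependent_tpow {n k : ℕ} (h : n ≤ k) :
    LinearIndependent ℂ
      (fun σ : {σ : RookMonoid n // σ ≠ rookZero n} => tpow k σ.val.val) := by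
  classical
  rw [linearIndependent_iff']
  intro s c hc
  by_contra! hne
  obtain ⟨σ₀, hσ₀, hcσ₀⟩ := hne
  obtain ⟨τ, hτ, hmax⟩ := (s.filter fun σ => c σ ≠ 0).exists_max_image
    (fun σ => (rookSupp σ.val.val).card) ⟨σ₀, by simp [hσ₀, hcσ₀]⟩
  rw [Finset.mem_filter] at hτ
  obtain ⟨p, hp⟩ := exists_tuple_range (k := k) (rookSupp τ.val.val) (rookSupp_nonempty τ.property)
    ((card_rookSupp_le τ.val.property).trans h)
  have hentry := congrFun (congrFun hc fun t => (p t).1) fun t => (p t).2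
  rw [Matrix.sum_apply, Finset.sum_eq_single_of_mem τ hτ.1] at hentry
  · have h1 : tpow k τ.val.val (fun t => (p t).1) (fun t => (p t).2) = 1 := by
      rw [tpow_apply]
      refine Finset.prod_eq_one fun t _ => ?_
      have := mem_rookSupp.1 ((hp (p t)).2 ⟨t, rfl⟩)
      exact (τ.val.property.1 _ _).resolve_left this
    rw [Matrix.smul_apply, h1] at hentry
    exact hτ.2 (by simpa using hentry)
  · intro σ hσ hστ
    by_contra hterm
    rw [Matrix.smul_apply, smul_eq_mul, mul_eq_zero, not_or, tpow_apply] at hterm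
    have hsub : rookSupp τ.val.val ⊆ rookSupp σ.val.val := by
      intro x hx
      obtain ⟨t, rfl⟩ := (hp x).1 hx
      exact mem_rookSupp.2 (Finset.prod_ne_zero_iff.1 hterm.2 t (Finset.mem_univ t))
    have := Finset.eq_of_subset_of_card_le hsub (hmax σ (by simp [hσ, hterm.1]))
    exact hστ (Subtype.ext (rookSupp_injective this.symm))

/-- The diagonal idempotent `ε_S`, i.e. the partial identity map with domain `S`. -/
def diagIdem {n : ℕ} (S : Finset (Fin n)) : RookMonoid n :=
  ⟨Matrix.diagonal fun a => if a ∈ S then 1 else 0, by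
    refine ⟨fun i j => ?_, fun i j j' h h' => ?_, fun i i' j h h' => ?_⟩
    · rw [Matrix.diagonal_apply]
      split_ifs <;> simp
    · rw [Matrix.diagonal_apply] at h h'
      grind
    · rw [Matrix.diagonal_apply] at h h'
      grind⟩

lemma diagIdem_apply {n : ℕ} (S : Finset (Fin n)) (a b : Fin n) :
    (diagIdem S).val a b = if a = b then (if a ∈ S then 1 else 0) else 0 :=
  Matrix.diagonal_apply _ _ _

lemma diagIdem_injective {n : ℕ} : Function.Injective (diagIdem (n := n)) := by
  intro S T h
  ext a
  have := congrArg (fun σ : RookMonoid n => σ.val a a) h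
  simp only [diagIdem_apply, if_true] at this
  by_cases h1 : a ∈ S <;> by_cases h2 : a ∈ T <;> simp_all

lemma diagIdem_empty {n : ℕ} : diagIdem (∅ : Finset (Fin n)) = rookZero n := by
  apply Subtype.ext
  ext a b
  simp [diagIdem_apply, rookZero]

lemma tpow_rookZero {n k : ℕ} (hk : 0 < k) : tpow k (rookZero n).val = 0 := by
  ext l i
  exact Finset.prod_eq_zero (Finset.mem_univ (⟨0, hk⟩ : Fin k)) rfl

lemma sum_neg_one_pow_tpow_diagIdem {n k : ℕ} (h : k < n) :
    ∑ S : Finset (Fin n), (-1 : ℂ) ^ S.card • tpow k (diagIdem S).val = 0 := by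
  ext l i
  rw [Matrix.sum_apply, Matrix.zero_apply]
  obtain ⟨a, ha⟩ : ∃ a, ∀ t, l t ≠ a := by
    by_contra! hsurj
    have := Fintype.card_le_of_surjective l hsurj
    simp at this
    omega
  rw [← Finset.powerset_univ, ← Finset.insert_erase (Finset.mem_univ a),
    Finset.sum_powerset_insert (Finset.notMem_erase a _), ← Finset.sum_add_distrib]
  refine Finset.sum_eq_zero fun S hS => ?_
  have haS : a ∉ S := fun haS => Finset.notMem_erase a _ (Finset.mem_powerset.1 hS haS)
  have heq : tpow k (diagIdem (insert a S)).val l i = tpow k (diagIdem S).val l i := by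
    rw [tpow_apply, tpow_apply]
    refine Finset.prod_congr rfl fun t _ => ?_
    simp [diagIdem_apply, ha t]
  rw [Matrix.smul_apply, Matrix.smul_apply, heq, Finset.card_insert_of_notMem haS, pow_succ]
  simp

lemma not_linearIndependent_tpow {n k : ℕ} (hk : 0 < k) (h : k < n) :
    ¬ LinearIndependent ℂ
      (fun σ : {σ : RookMonoid n // σ ≠ rookZero n} => tpow k σ.val.val) := by
  intro hli
  let f : {S : Finset (Fin n) // S ≠ ∅} → {σ : RookMonoid n // σ ≠ rookZero n} := fun S =>
    ⟨diagIdem S.val, fun h0 => S.property (diagIdem_injective (h0.trans diagIdem_empty.symm))⟩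
  have hf : Function.Injective f := fun S T hST =>
    Subtype.ext (diagIdem_injective (congrArg Subtype.val hST))
  have hrel : ∑ S : {S : Finset (Fin n) // S ≠ ∅},
      (-1 : ℂ) ^ S.val.card • tpow k (diagIdem S.val).val = 0 := by
    rw [← Finset.sum_subtype (Finset.univ.erase ∅) (by simp)
      fun S : Finset (Fin n) => (-1 : ℂ) ^ S.card • tpow k (diagIdem S).val,
      Finset.sum_erase _ (by rw [diagIdem_empty, tpow_rookZero hk, smul_zero])]
    exact sum_neg_one_pow_tpow_diagIdem h
  have hzero := Fintype.linearIndependent_iff.1 (hli.comp f hf)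
    (fun S => (-1 : ℂ) ^ S.val.card) hrel ⟨{⟨0, by omega⟩}, Finset.singleton_ne_empty _⟩
  simp at hzero

/-- The zero element of IS_n acts as the zero operator on V^{⊗k}, and the
representation of the contracted semigroup algebra of IS_n on V^{⊗k} is
faithful iff k ≥ n: the operators induced by the nonzero elements of IS_n are
linearly independent iff k ≥ n. -/
theorem contracted_isn_algebra_faithful_iff (n k : ℕ) (hn : 0 < n) (hk : 0 < k) :
    tpow k (rookZero n).val = 0 ∧
      (LinearIndependent ℂ
          (fun σ : {σ : RookMonoid n // σ ≠ rookZero n} => tpow k σ.val.val) ↔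
        n ≤ k) := by
  refine ⟨tpow_rookZero hk, fun hli => ?_, linearIndependent_tpow⟩
  by_contra hlt
  exact not_linearIndependent_tpow hk (not_le.1 hlt) hli
end

section
/- For all positive integers n and k, the representation of the semigroup algebra ℂ[I*_k] on V^{⊗k} is faithful if and only if k ≤ n; concretely, the family of operators on V^{⊗k} induced by the elements of the dual symmetric inverse semigroup I*_k is linearly independent over ℂ if and only if k ≤ n. -/
/-!
If `k ≤ n`, evaluate a vanishing combination `∑ g β • dualOp β` at an entry `(l, i)` for which the
labelling `(i, l)` of `K̃` has kernel exactly `α`. Such a labelling exists because every block of `α`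
meets `K`, so `α` has at most `k ≤ n` blocks (`DualSym.exists_labelling`). Only the `β` finer than `α`
contribute to this entry. Taking `α` in the support of `g` with the fewest related pairs, the
only contribution is `g α`, which is therefore `0`.

If `n < k`, the symmetric group `S_k` embeds in `I*_k` (`DualSym.ofPerm`), and the antisymmetrizer
`∑ sign σ • σ` acts by zero on `V^{⊗k}` because `Λ^k V = 0`. Concretely, its `(l, i)` entry is the
determinant of the matrix `(a, b) ↦ [i a = l b]`, and this matrix has two equal rows since
`i : Fin k → Fin n` is not injective.
-/

open scoped BigOperators

namespace DualSym

theorem ext_rel {k : ℕ} {α β : DualSym k} (h : ∀ x y, α.rel x y ↔ β.rel x y) : α = β := by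
  cases α
  cases β
  congr 1
  funext x y
  exact propext (h x y)

/-- For `k ≤ n`, every `α` is the kernel of some labelling of `K̃` by `n` labels: label a block by
one of the elements of `K` in it. -/
theorem exists_labelling {n k : ℕ} (hkn : k ≤ n) (α : DualSym k) :
    ∃ f : Fin k ⊕ Fin k → Fin n, ∀ x y, f x = f y ↔ α.rel x y := by
  let s : Setoid (Fin k ⊕ Fin k) := ⟨α.rel, α.refl, α.symm, α.trans⟩
  choose c hc using α.meetsL
  have hout : ∀ x, α.rel (Quotient.mk s x).out x := fun x => Quotient.mk_out (s := s) x
  refine ⟨fun x => Fin.castLE hkn (c (Quotient.mk s x).out), fun x y => ⟨fun h => ?_, fun h => ?_⟩⟩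
  · have h' : c (Quotient.mk s x).out = c (Quotient.mk s y).out := Fin.castLE_injective hkn h
    have hx := hc (Quotient.mk s x).out
    rw [h'] at hx
    exact α.trans (α.symm (hout x)) (α.trans hx (α.trans (α.symm (hc _)) (hout y)))
  · have hmk : Quotient.mk s x = Quotient.mk s y := Quotient.sound h
    simp only [hmk]

/-- The element of `I*_k` with blocks `{σ b, b'}`, encoded as the kernel of the map to `Fin k`
sending `a ↦ a` and `b' ↦ σ b`. -/
def ofPerm {k : ℕ} (σ : Equiv.Perm (Fin k)) : DualSym k where
  rel x y := Sum.elim id σ x = Sum.elim id σ y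
  refl _ := rfl
  symm h := h.symm
  trans h h' := h.trans h'
  meetsL x := ⟨Sum.elim id σ x, rfl⟩
  meetsR x := ⟨σ.symm (Sum.elim id σ x), by simp⟩

theorem ofPerm_injective (k : ℕ) : Function.Injective (ofPerm (k := k)) := by
  intro σ τ h
  ext1 b
  have h1 : (ofPerm σ).rel (Sum.inl (σ b)) (Sum.inr b) := by simp [ofPerm]
  rw [h] at h1
  simpa [ofPerm] using h1

end DualSym

theorem dualOp_ofPerm_apply (n k : ℕ) (σ : Equiv.Perm (Fin k)) (l i : Fin k → Fin n) :
    dualOp n k (DualSym.ofPerm σ) l i = ∏ b, if i (σ b) = l b then (1 : ℂ) else 0 := by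
  classical
  rw [Finset.prod_ite_zero]
  simp only [dualOp, Matrix.of_apply, Finset.prod_const_one, Finset.mem_univ, true_implies]
  refine if_congr ⟨fun h b => ?_, fun h x y hxy => ?_⟩ rfl rfl
  · exact h (Sum.inl (σ b)) (Sum.inr b) (by simp [DualSym.ofPerm])
  · have key : ∀ z, Sum.elim i l z = i (Sum.elim id σ z) := by
      rintro (a | b)
      · rfl
      · exact (h b).symm
    rw [key x, key y]
    exact congrArg i hxy

theorem sum_sign_smul_dualOp_eq_zero {n k : ℕ} (h : n < k) :
    ∑ σ : Equiv.Perm (Fin k),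
      ((Equiv.Perm.sign σ : ℤ) : ℂ) • dualOp n k (DualSym.ofPerm σ) = 0 := by
  ext l i
  obtain ⟨a, b, hne, hab⟩ := Fintype.exists_ne_map_eq_of_card_lt i (by simpa using h)
  have hdet : (Matrix.of fun p q : Fin k => if i p = l q then (1 : ℂ) else 0).det = 0 :=
    Matrix.det_zero_of_row_eq hne (by funext q; simp [hab])
  rw [Matrix.det_apply'] at hdet
  simpa [Matrix.sum_apply, dualOp_ofPerm_apply] using hdet

theorem linearIndependent_dualOp {n k : ℕ} (hkn : k ≤ n) : LinearIndependent ℂ (dualOp n k) := by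
  classical
  rw [linearIndependent_iff']
  intro s g hg
  by_contra! hne
  obtain ⟨α₀, hα₀, hgα₀⟩ := hne
  obtain ⟨α, hα, hmin⟩ := (s.filter fun β => g β ≠ 0).exists_min_image
    (fun β => {p : (Fin k ⊕ Fin k) × (Fin k ⊕ Fin k) | β.rel p.1 p.2}.ncard)
    ⟨α₀, Finset.mem_filter.2 ⟨hα₀, hgα₀⟩⟩
  obtain ⟨hαs, hgα⟩ := Finset.mem_filter.1 hα
  obtain ⟨f, hf⟩ := α.exists_labelling hkn
  have hentry : ∀ β : DualSym k, dualOp n k β (f ∘ Sum.inr) (f ∘ Sum.inl) =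
      if ∀ x y, β.rel x y → α.rel x y then 1 else 0 := by
    intro β
    simp only [dualOp, Matrix.of_apply, Sum.elim_comp_inl_inr, hf]
  have h0 := congrFun (congrFun hg (f ∘ Sum.inr)) (f ∘ Sum.inl)
  simp only [Matrix.sum_apply, Matrix.smul_apply, hentry, Matrix.zero_apply] at h0
  rw [Finset.sum_eq_single_of_mem α hαs] at h0
  · exact hgα (by simpa using h0)
  · intro β hβs hβα
    by_cases hgβ : g β = 0
    · simp [hgβ]
    · rw [if_neg, smul_zero]
      intro hle
      -- a finer `β` has no fewer related pairs by minimality, hence equals `α`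
      have heq := Set.eq_of_subset_of_ncard_le
        (s := {p : (Fin k ⊕ Fin k) × (Fin k ⊕ Fin k) | β.rel p.1 p.2})
        (t := {p | α.rel p.1 p.2}) (fun p hp => hle _ _ hp)
        (hmin β (Finset.mem_filter.2 ⟨hβs, hgβ⟩)) (Set.toFinite _)
      exact hβα (DualSym.ext_rel fun x y => Set.ext_iff.1 heq (x, y))

/-- The representation of ℂ[I*_k] on V^{⊗k} is faithful iff k ≤ n: the
operators induced by the elements of I*_k are linearly independent iff k ≤ n. -/
theorem dualSym_algebra_faithful_iff (n k : ℕ) (hn : 0 < n) (hk : 0 < k) :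
    LinearIndependent ℂ (dualOp n k) ↔ k ≤ n := by
  refine ⟨fun h => ?_, linearIndependent_dualOp⟩
  by_contra! hlt
  have h1 := Fintype.linearIndependent_iff.1 (h.comp _ (DualSym.ofPerm_injective k)) _
    (sum_sign_smul_dualOp_eq_zero hlt) 1
  simp at h1
end

section
/- For all positive integers n and k, the centralizer algebra End_{IS_n}(U^{⊗k}) — the set of all ℂ-linear endomorphisms of U^{⊗k} commuting with the action of every element of IS_n — equals the ℂ-linear span of the operators on U^{⊗k} given by the elements of the partial dual symmetric inverse semigroup PI*_k (i.e., the image of ℂ[PI*_k]). -/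
/-!
Identify an operator on `U^{⊗k}` with its matrix entries `A l i`, and view a pair `(i, l)` of
multi-indices as a labelling of `K ⊔ K'`, with one more point adjoined that is always labelled `0`.
The kernel of this labelling is an equivalence relation (`pairKer`).

*The operators of `PI*_k` commute with `IS_n`* (`pOp_comm`). Both products have entries in `{0, 1}`,
and each entry is `1` exactly when a suitable intermediate labelling exists. As every block
meets both `K` and `K'`, a labelling of one side on which a partial injection is defined can be
transported along the blocks to the other side (`exists_transport`).

*The centralizer is contained in the span.* Let `A` commute with `IS_n`. Commuting with the
partial identities supported on the values of `i`, respectively of `l`, forces `A l i = 0` unless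
`i` and `l` have the same nonzero values (`balanced_of_ne_zero`). Commuting with the partial
injection that carries one labelling to another with the same kernel shows that `A l i` depends
only on the kernel (`entry_eq_of_ker_eq`). Hence `A` is a linear combination of the indicator
matrices `kerInd s` of the balanced pairs with kernel `s`. If `s` is the kernel of a balanced pair,
then its blocks off the zero block form an element `α` of `PI*_k`, and
`pOp α = ∑_{t ≥ s} kerInd t`. This system is unitriangular, so downward induction
in the finite lattice of equivalence relations puts every `kerInd s` in the span (`kerInd_mem`).
-/

open scoped BigOperators

/-- The action of a rook matrix on U = V ⊕ ℂe₀: it acts by the matrix on V and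
as the identity on the extra line ℂe₀ (indexed by `none`). -/
noncomputable def rookU (n : ℕ) (M : Matrix (Fin n) (Fin n) ℂ) :
    Matrix (Option (Fin n)) (Option (Fin n)) ℂ :=
  Matrix.of fun l i =>
    match l, i with
    | some a, some b => M a b
    | none, none => 1
    | _, _ => 0

/-- The partial dual symmetric inverse semigroup PI*_k: partitions of subsets of
K̃ = {1,…,k} ⊔ {1',…,k'} (encoded as partial equivalence relations on
`Fin k ⊕ Fin k`, with `Sum.inl` the unprimed and `Sum.inr` the primed elements),
each of whose blocks intersects both K and K'. -/
structure PDualSym (k : ℕ) where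
  rel : Fin k ⊕ Fin k → Fin k ⊕ Fin k → Prop
  symm : ∀ {x y}, rel x y → rel y x
  trans : ∀ {x y z}, rel x y → rel y z → rel x z
  meetsL : ∀ x, rel x x → ∃ a, rel x (Sum.inl a)
  meetsR : ∀ x, rel x x → ∃ b, rel x (Sum.inr b)

instance (k : ℕ) : Finite (PDualSym k) := by
  apply Finite.of_injective (fun α : PDualSym k => α.rel)
  intro a b h
  cases a; cases b; simpa using h

/-- The condition defining the ordinary action of α ∈ PI*_k on the distinguished
basis of U^{⊗k} (basis vectors indexed by `Fin k → Option (Fin n)`, where `none`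
encodes the extra index 0): α(v_i) = v_l iff the labelling of K̃ given by i on K
and l on K' is constant on the blocks of α and is 0 (=`none`) outside the domain
of α. -/
def pCond {n k : ℕ} (α : PDualSym k) (i l : Fin k → Option (Fin n)) : Prop :=
  (∀ x y, α.rel x y → Sum.elim i l x = Sum.elim i l y) ∧
  (∀ x, ¬ α.rel x x → Sum.elim i l x = none)

open Classical in
/-- The operator on U^{⊗k} attached to α ∈ PI*_k (ordinary action). -/
noncomputable def pOp (n k : ℕ) (α : PDualSym k) :
    Matrix (Fin k → Option (Fin n)) (Fin k → Option (Fin n)) ℂ :=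
  Matrix.of fun l i => if pCond α i l then 1 else 0

/-! ### The action of a rook matrix in coordinates -/

/-- The graph of the partial injection of `{0} ∪ N` given by a rook matrix. -/
def rookRel {n : ℕ} (σ : RookMonoid n) (x y : Option (Fin n)) : Prop := rookU n σ.val x y = 1

lemma rookU_zero_or_one {n : ℕ} (σ : RookMonoid n) (x y : Option (Fin n)) :
    rookU n σ.val x y = 0 ∨ rookU n σ.val x y = 1 := by
  rcases x with _ | a <;> rcases y with _ | b <;> simp [rookU]
  exact σ.2.1 a b

lemma rookRel_none {n : ℕ} (σ : RookMonoid n) : rookRel σ none none := by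
  simp [rookRel, rookU]

lemma rookRel_right_unique {n : ℕ} (σ : RookMonoid n) {x y z : Option (Fin n)}
    (h : rookRel σ x y) (h' : rookRel σ x z) : y = z := by
  rcases x with _ | a <;> rcases y with _ | b <;> rcases z with _ | c <;>
    simp [rookRel, rookU] at h h' ⊢
  exact σ.2.2.1 a b c (by simp [h]) (by simp [h'])

lemma rookRel_left_unique {n : ℕ} (σ : RookMonoid n) {x y z : Option (Fin n)}
    (h : rookRel σ x z) (h' : rookRel σ y z) : x = y := by
  rcases x with _ | a <;> rcases y with _ | b <;> rcases z with _ | c <;>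
    simp [rookRel, rookU] at h h' ⊢
  exact σ.2.2.2 a b c (by simp [h]) (by simp [h'])

open Classical in
lemma tpow_rook_apply {n k : ℕ} (σ : RookMonoid n) (l i : Fin k → Option (Fin n)) :
    tpow k (rookU n σ.val) l i = if ∀ t, rookRel σ (l t) (i t) then 1 else 0 := by
  simp only [tpow, Matrix.of_apply]
  split_ifs with h
  · exact Finset.prod_eq_one fun t _ => h t
  · push Not at h
    obtain ⟨t, ht⟩ := h
    exact Finset.prod_eq_zero (Finset.mem_univ t) ((rookU_zero_or_one σ _ _).resolve_right ht)

/-- Two labellings with the same kernel and the same zero set are carried to each other by a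
rook matrix whose domain consists of the nonzero labels that occur. -/
lemma exists_rook {n : ℕ} {ι : Type*} (f g : ι → Option (Fin n))
    (hfg : ∀ x y, f x = f y ↔ g x = g y) (h0 : ∀ x, f x = none ↔ g x = none) :
    ∃ σ : RookMonoid n, ∀ x y, rookRel σ x y ↔
      (x = none ∧ y = none) ∨ ∃ t, f t = x ∧ g t = y := by
  classical
  refine ⟨⟨Matrix.of fun a b => if ∃ t, f t = some a ∧ g t = some b then 1 else 0, ?_, ?_, ?_⟩, ?_⟩
  · intro a b
    simp only [Matrix.of_apply]
    split_ifs <;> simp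
  · intro a b c h h'
    simp only [Matrix.of_apply, ne_eq, ite_eq_right_iff, one_ne_zero, imp_false, not_not] at h h'
    obtain ⟨t, ht, ht'⟩ := h
    obtain ⟨s, hs, hs'⟩ := h'
    have := (hfg t s).1 (ht.trans hs.symm)
    rw [ht', hs'] at this
    exact Option.some.inj this
  · intro a b c h h'
    simp only [Matrix.of_apply, ne_eq, ite_eq_right_iff, one_ne_zero, imp_false, not_not] at h h'
    obtain ⟨t, ht, ht'⟩ := h
    obtain ⟨s, hs, hs'⟩ := h'
    have := (hfg t s).2 (ht'.trans hs'.symm)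
    rw [ht, hs] at this
    exact Option.some.inj this
  · rintro (_ | a) (_ | b)
    · simp [rookRel, rookU]
    · simp only [rookRel, rookU, Matrix.of_apply, zero_ne_one, reduceCtorEq, and_false, false_or,
        false_iff, not_exists, not_and]
      intro t ht
      simp [(h0 t).1 ht]
    · simp only [rookRel, rookU, Matrix.of_apply, zero_ne_one, reduceCtorEq, false_and, false_or,
        false_iff, not_exists, not_and]
      intro t ht h
      simp [(h0 t).2 h] at ht
    · simp [rookRel, rookU]

/-! ### The operators of `PI*_k` commute with the rook monoid -/

/-- A labelling `g` compatible with `α` can be transported along a functional relation `r`, as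
soon as this is possible (with result `i`) on a set `e` of points that meets every block. -/
lemma exists_transport {k : ℕ} {β : Type*} (α : PDualSym k) (r : Option β → Option β → Prop)
    (r0 : r none none) (hr : ∀ x y z, r x y → r x z → y = z)
    (g : Fin k ⊕ Fin k → Option β) (hg : ∀ x y, α.rel x y → g x = g y)
    (hg0 : ∀ x, ¬ α.rel x x → g x = none)
    (e : Fin k → Fin k ⊕ Fin k) (he : ∀ x, α.rel x x → ∃ a, α.rel x (e a))
    (i : Fin k → Option β) (hi : ∀ a, r (g (e a)) (i a)) :
    ∃ f : Fin k ⊕ Fin k → Option β, (∀ x y, α.rel x y → f x = f y) ∧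
      (∀ x, ¬ α.rel x x → f x = none) ∧ (∀ a, f (e a) = i a) ∧ ∀ x, r (g x) (f x) := by
  have key : ∀ x, ∃ y, r (g x) y ∧ (¬ α.rel x x → y = none) := by
    intro x
    by_cases hx : α.rel x x
    · obtain ⟨a, ha⟩ := he x hx
      exact ⟨i a, by rw [hg _ _ ha]; exact hi a, fun h => absurd hx h⟩
    · exact ⟨none, by rw [hg0 x hx]; exact r0, fun _ => rfl⟩
  choose f hf hf0 using key
  refine ⟨f, fun x y h => hr (g x) _ _ (hf x) ?_, hf0, fun a => hr _ _ _ (hf _) (hi a), hf⟩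
  rw [hg _ _ h]
  exact hf y

/-- A sum of indicators of a predicate with at most one solution. -/
lemma sum_indicator_of_unique {γ : Type*} [Fintype γ] (P : γ → Prop) [DecidablePred P]
    [Decidable (∃ j, P j)] (hP : ∀ j j', P j → P j' → j = j') :
    ∑ j, (if P j then (1 : ℂ) else 0) = if ∃ j, P j then 1 else 0 := by
  split_ifs with h
  · obtain ⟨j, hj⟩ := h
    rw [Finset.sum_eq_single j, if_pos hj]
    · exact fun j' _ hne => if_neg fun hj' => hne (hP _ _ hj' hj)
    · simp
  · push Not at h
    exact Finset.sum_eq_zero fun j _ => if_neg (h j)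

lemma pOp_comm {n k : ℕ} (α : PDualSym k) (σ : RookMonoid n) :
    pOp n k α * tpow k (rookU n σ.val) = tpow k (rookU n σ.val) * pOp n k α := by
  classical
  ext l i
  simp only [Matrix.mul_apply, tpow_rook_apply, pOp, Matrix.of_apply, ← ite_and, ite_mul, one_mul,
    zero_mul]
  rw [sum_indicator_of_unique _ (fun j j' h h' => funext fun t =>
      rookRel_left_unique σ (h.2 t) (h'.2 t)),
    sum_indicator_of_unique _ (fun j j' h h' => funext fun t =>
      rookRel_right_unique σ (h.1 t) (h'.1 t))]
  congr 1
  apply propext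
  constructor
  · rintro ⟨j, hj, hr⟩
    obtain ⟨f, h1, h2, h3, h4⟩ := exists_transport α (rookRel σ) (rookRel_none σ)
      (fun x y z => rookRel_right_unique σ) (Sum.elim j l) hj.1 hj.2 Sum.inl α.meetsL i hr
    have hf : Sum.elim i (fun b => f (Sum.inr b)) = f := by
      ext1 x
      rcases x with a | b
      · exact (h3 a).symm
      · rfl
    exact ⟨fun b => f (Sum.inr b), fun b => h4 (Sum.inr b),
      by rw [hf]; exact h1, by rw [hf]; exact h2⟩
  · rintro ⟨j, hr, hj⟩
    obtain ⟨f, h1, h2, h3, h4⟩ := exists_transport α (fun x y => rookRel σ y x) (rookRel_none σ)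
      (fun x y z h h' => rookRel_left_unique σ h h') (Sum.elim i j) hj.1 hj.2 Sum.inr α.meetsR l hr
    have hf : Sum.elim (fun a => f (Sum.inl a)) l = f := by
      ext1 x
      rcases x with a | b
      · rfl
      · exact (h3 b).symm
    exact ⟨fun a => f (Sum.inl a), ⟨by rw [hf]; exact h1, by rw [hf]; exact h2⟩,
      fun a => h4 (Sum.inl a)⟩

/-! ### Kernels of labellings and balanced pairs -/

/-- The labelling of `K ⊔ K'` by `i` and `l`, extended by the label `0` at one more point. -/
def pairLab {n k : ℕ} (i l : Fin k → Option (Fin n)) :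
    Option (Fin k ⊕ Fin k) → Option (Fin n) :=
  fun o => o.elim none (Sum.elim i l)

/-- The kernel of the extended labelling; it records which labels agree and which vanish. -/
def pairKer {n k : ℕ} (i l : Fin k → Option (Fin n)) : Setoid (Option (Fin k ⊕ Fin k)) :=
  Setoid.ker (pairLab i l)

/-- The multi-indices `i` and `l` have the same set of nonzero values. -/
def PairBalanced {n k : ℕ} (i l : Fin k → Option (Fin n)) : Prop :=
  ∀ v : Fin n, (∃ a, i a = some v) ↔ ∃ b, l b = some v

/-- The element of `PI*_k` whose blocks are the fibres of a balanced labelling over the nonzero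
labels. -/
def pairBlocks {n k : ℕ} (i l : Fin k → Option (Fin n)) (h : PairBalanced i l) : PDualSym k where
  rel x y := Sum.elim i l x = Sum.elim i l y ∧ Sum.elim i l x ≠ none
  symm := fun h => ⟨h.1.symm, h.1 ▸ h.2⟩
  trans := fun h h' => ⟨h.1.trans h'.1, h.2⟩
  meetsL := by
    rintro (a | b) ⟨-, hx⟩
    · exact ⟨a, rfl, hx⟩
    · obtain ⟨v, hv⟩ := Option.ne_none_iff_exists'.1 hx
      obtain ⟨a, ha⟩ := (h v).2 ⟨b, hv⟩
      exact ⟨a, hv.trans ha.symm, hx⟩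
  meetsR := by
    rintro (a | b) ⟨-, hx⟩
    · obtain ⟨v, hv⟩ := Option.ne_none_iff_exists'.1 hx
      obtain ⟨b, hb⟩ := (h v).1 ⟨a, hv⟩
      exact ⟨b, hv.trans hb.symm, hx⟩
    · exact ⟨b, rfl, hx⟩

lemma balanced_of_pCond {n k : ℕ} {α : PDualSym k} {i l : Fin k → Option (Fin n)}
    (h : pCond α i l) : PairBalanced i l := by
  intro v
  constructor
  · rintro ⟨a, ha⟩
    have hx : α.rel (Sum.inl a) (Sum.inl a) := by
      by_contra hx
      simpa [ha] using h.2 _ hx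
    obtain ⟨b, hb⟩ := α.meetsR _ hx
    exact ⟨b, (h.1 _ _ hb).symm.trans ha⟩
  · rintro ⟨b, hb⟩
    have hx : α.rel (Sum.inr b) (Sum.inr b) := by
      by_contra hx
      simpa [hb] using h.2 _ hx
    obtain ⟨a, ha⟩ := α.meetsL _ hx
    exact ⟨a, (h.1 _ _ ha).symm.trans hb⟩

lemma pCond_pairBlocks_iff {n k : ℕ} {i₀ l₀ : Fin k → Option (Fin n)} (h : PairBalanced i₀ l₀)
    (i l : Fin k → Option (Fin n)) :
    pCond (pairBlocks i₀ l₀ h) i l ↔ pairKer i₀ l₀ ≤ pairKer i l := by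
  constructor
  · rintro ⟨h1, h2⟩
    have h2' : ∀ x, Sum.elim i₀ l₀ x = none → Sum.elim i l x = none :=
      fun x hx => h2 x fun hr => hr.2 hx
    rintro (_ | x) (_ | y) hxy
    · rfl
    · exact (h2' y (Eq.symm hxy)).symm
    · exact h2' x hxy
    · change Sum.elim i₀ l₀ x = Sum.elim i₀ l₀ y at hxy
      change Sum.elim i l x = Sum.elim i l y
      by_cases hx : Sum.elim i₀ l₀ x = none
      · rw [h2' x hx, h2' y (hxy ▸ hx)]
      · exact h1 x y ⟨hxy, hx⟩
  · intro hle
    refine ⟨fun x y hr => @hle (some x) (some y) hr.1, fun x hx => @hle (some x) none ?_⟩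
    by_contra hne
    exact hx ⟨rfl, hne⟩

/-! ### Matrix entries of a centralizing operator -/

section Centralizer

variable {n k : ℕ} {A : Matrix (Fin k → Option (Fin n)) (Fin k → Option (Fin n)) ℂ}

lemma balanced_of_ne_zero
    (hA : ∀ σ : RookMonoid n, A * tpow k (rookU n σ.val) = tpow k (rookU n σ.val) * A)
    {l i : Fin k → Option (Fin n)} (h : A l i ≠ 0) : PairBalanced i l := by
  classical
  intro v
  constructor
  · -- The partial identity on the values of `l` fixes `v_l`, so it must not kill `v_i`.
    obtain ⟨σ, hσ⟩ := exists_rook l l (fun _ _ => Iff.rfl) (fun _ => Iff.rfl)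
    have e := congrFun (congrFun (hA σ) l) i
    simp only [Matrix.mul_apply, tpow_rook_apply] at e
    rw [Finset.sum_eq_single (a := l) (f := fun j => _ * A j i)
      (fun j _ hj => by
        rw [if_neg, zero_mul]
        intro hr
        exact hj (funext fun t => rookRel_right_unique σ (hr t)
          ((hσ _ _).2 (Or.inr ⟨t, rfl, rfl⟩))))
      (by simp), if_pos (fun t => (hσ _ _).2 (Or.inr ⟨t, rfl, rfl⟩)), one_mul] at e
    rw [← e] at h
    obtain ⟨j, -, hj⟩ := Finset.exists_ne_zero_of_sum_ne_zero h
    have hr := (ite_ne_right_iff.1 (right_ne_zero_of_mul hj)).1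
    rintro ⟨a, ha⟩
    have := (hσ _ _).1 (hr a)
    rw [ha] at this
    simp only [reduceCtorEq, and_false, false_or] at this
    obtain ⟨t, -, ht⟩ := this
    exact ⟨t, ht⟩
  · obtain ⟨σ, hσ⟩ := exists_rook i i (fun _ _ => Iff.rfl) (fun _ => Iff.rfl)
    have e := congrFun (congrFun (hA σ) l) i
    simp only [Matrix.mul_apply, tpow_rook_apply] at e
    rw [Finset.sum_eq_single (a := i) (f := fun j => A l j * _)
      (fun j _ hj => by
        rw [if_neg, mul_zero]
        intro hr
        exact hj (funext fun t => rookRel_left_unique σ (hr t)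
          ((hσ _ _).2 (Or.inr ⟨t, rfl, rfl⟩))))
      (by simp), if_pos (fun t => (hσ _ _).2 (Or.inr ⟨t, rfl, rfl⟩)), mul_one] at e
    rw [e] at h
    obtain ⟨j, -, hj⟩ := Finset.exists_ne_zero_of_sum_ne_zero h
    have hr := (ite_ne_right_iff.1 (left_ne_zero_of_mul hj)).1
    rintro ⟨b, hb⟩
    have := (hσ _ _).1 (hr b)
    rw [hb] at this
    simp only [reduceCtorEq, false_and, false_or] at this
    obtain ⟨t, ht, -⟩ := this
    exact ⟨t, ht⟩

lemma entry_eq_of_ker_eq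
    (hA : ∀ σ : RookMonoid n, A * tpow k (rookU n σ.val) = tpow k (rookU n σ.val) * A)
    {l i l' i' : Fin k → Option (Fin n)} (h : pairKer i l = pairKer i' l') :
    A l i = A l' i' := by
  classical
  have hiff : ∀ x y, pairLab i' l' x = pairLab i' l' y ↔ pairLab i l x = pairLab i l y := by
    intro x y
    change pairKer i' l' x y ↔ pairKer i l x y
    rw [h]
  obtain ⟨σ, hσ⟩ := exists_rook (pairLab i' l') (pairLab i l) hiff (fun x => hiff x none)
  have hi : ∀ t, rookRel σ (i' t) (i t) :=
    fun t => (hσ _ _).2 (Or.inr ⟨some (Sum.inl t), rfl, rfl⟩)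
  have hl : ∀ t, rookRel σ (l' t) (l t) :=
    fun t => (hσ _ _).2 (Or.inr ⟨some (Sum.inr t), rfl, rfl⟩)
  -- The partial injection maps `v_i` to `v_{i'}` and its inverse maps `v_{l'}` to `v_l`.
  have e := congrFun (congrFun (hA σ) l') i
  simp only [Matrix.mul_apply, tpow_rook_apply] at e
  rw [Finset.sum_eq_single (a := i') (f := fun j => A l' j * _)
      (fun j _ hj => by
        rw [if_neg, mul_zero]
        exact fun hr => hj (funext fun t => rookRel_left_unique σ (hr t) (hi t)))
      (by simp),
    Finset.sum_eq_single (a := l) (f := fun j => _ * A j i)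
      (fun j _ hj => by
        rw [if_neg, zero_mul]
        exact fun hr => hj (funext fun t => rookRel_right_unique σ (hr t) (hl t)))
      (by simp), if_pos hi, if_pos hl, one_mul, mul_one] at e
  exact e.symm

end Centralizer

/-! ### Indicator matrices of kernels -/

open Classical in
/-- The indicator matrix of the balanced pairs of multi-indices with kernel `s`. -/
noncomputable def kerInd (n k : ℕ) (s : Setoid (Option (Fin k ⊕ Fin k))) :
    Matrix (Fin k → Option (Fin n)) (Fin k → Option (Fin n)) ℂ :=
  Matrix.of fun l i => if pairKer i l = s ∧ PairBalanced i l then 1 else 0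

lemma kerInd_mem (n k : ℕ) (s : Setoid (Option (Fin k ⊕ Fin k))) :
    kerInd n k s ∈ Submodule.span ℂ (Set.range (pOp n k)) := by
  classical
  have : Finite (Setoid (Option (Fin k ⊕ Fin k))) :=
    Finite.of_injective (fun s => s.r) fun a b h => Setoid.ext fun x y => by
      exact iff_of_eq (congrFun (congrFun h x) y)
  have := Fintype.ofFinite (Setoid (Option (Fin k ⊕ Fin k)))
  induction s using WellFoundedGT.induction with
  | ind s ih =>
    by_cases hs : ∃ i₀ l₀ : Fin k → Option (Fin n), pairKer i₀ l₀ = s ∧ PairBalanced i₀ l₀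
    · obtain ⟨i₀, l₀, rfl, hb⟩ := hs
      have key : kerInd n k (pairKer i₀ l₀) = pOp n k (pairBlocks i₀ l₀ hb) -
          ∑ t with pairKer i₀ l₀ < t, kerInd n k t := by
        ext l i
        simp only [Matrix.sub_apply, Matrix.sum_apply, kerInd, pOp, Matrix.of_apply]
        by_cases hc : pCond (pairBlocks i₀ l₀ hb) i l
        · have hbal := balanced_of_pCond hc
          have hle := (pCond_pairBlocks_iff hb i l).1 hc
          simp only [hc, hbal, and_true, if_true, Finset.sum_ite_eq, Finset.mem_filter,
            Finset.mem_univ, true_and]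
          rcases hle.eq_or_lt with h | h
          · simp [h]
          · simp [h, h.ne']
        · have hle := mt (pCond_pairBlocks_iff hb i l).2 hc
          rw [if_neg hc, if_neg (fun h => hle h.1.ge), Finset.sum_eq_zero, sub_zero]
          intro t ht
          rw [if_neg]
          rintro ⟨rfl, -⟩
          exact hle (Finset.mem_filter.1 ht).2.le
      rw [key]
      exact Submodule.sub_mem _ (Submodule.subset_span ⟨_, rfl⟩)
        (Submodule.sum_mem _ fun t ht => ih t (Finset.mem_filter.1 ht).2)
    · have : kerInd n k s = 0 := by
        ext l i
        simp only [kerInd, Matrix.of_apply, Matrix.zero_apply]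
        exact if_neg fun h => hs ⟨i, l, h⟩
      rw [this]
      exact Submodule.zero_mem _

/-- Second Schur-Weyl duality, part (ii): the centralizer of the IS_n-action on
U^{⊗k} is exactly the linear span of the operators coming from PI*_k. -/
theorem end_isn_eq_span_pdualSym (n k : ℕ) (hn : 0 < n) (hk : 0 < k) :
    {A : Matrix (Fin k → Option (Fin n)) (Fin k → Option (Fin n)) ℂ |
        ∀ σ : RookMonoid n,
          A * tpow k (rookU n σ.val) = tpow k (rookU n σ.val) * A} =
      (Submodule.span ℂ (Set.range (pOp n k)) : Set _) := by
  classical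
  ext A
  simp only [Set.mem_setOf_eq, SetLike.mem_coe]
  constructor
  · intro hA
    have : Finite (Setoid (Option (Fin k ⊕ Fin k))) :=
      Finite.of_injective (fun s => s.r) fun a b h => Setoid.ext fun x y => by
        exact iff_of_eq (congrFun (congrFun h x) y)
    have := Fintype.ofFinite (Setoid (Option (Fin k ⊕ Fin k)))
    -- `c s` is the common value of the entries of `A` at the pairs with kernel `s`.
    have hc : ∀ s : Setoid (Option (Fin k ⊕ Fin k)), ∃ c : ℂ,
        ∀ i l : Fin k → Option (Fin n), pairKer i l = s → A l i = c := by
      intro s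
      by_cases hs : ∃ i₀ l₀ : Fin k → Option (Fin n), pairKer i₀ l₀ = s
      · obtain ⟨i₀, l₀, rfl⟩ := hs
        exact ⟨A l₀ i₀, fun i l h => entry_eq_of_ker_eq hA h⟩
      · exact ⟨0, fun i l h => absurd ⟨i, l, h⟩ hs⟩
    choose c hc using hc
    have key : A = ∑ s, c s • kerInd n k s := by
      ext l i
      simp only [Matrix.sum_apply, Matrix.smul_apply, kerInd, Matrix.of_apply, smul_eq_mul]
      by_cases hb : PairBalanced i l
      · simp [hb, hc _ i l rfl]
      · have : A l i = 0 := by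
          by_contra h
          exact hb (balanced_of_ne_zero hA h)
        simp [hb, this]
    rw [key]
    exact Submodule.sum_mem _ fun s _ => Submodule.smul_mem _ _ (kerInd_mem n k s)
  · intro hA σ
    induction hA using Submodule.span_induction with
    | mem x hx =>
      obtain ⟨α, rfl⟩ := hx
      exact pOp_comm α σ
    | zero => simp
    | add x y _ _ hx hy => rw [add_mul, mul_add, hx, hy]
    | smul c x _ hx => rw [Matrix.smul_mul, Matrix.mul_smul, hx]
end

section
/- For all positive integers n and k, the centralizer algebra End_{PI*_k}(U^{⊗k}) — the set of all ℂ-linear endomorphisms of U^{⊗k} commuting with the action of every element of PI*_k — equals the ℂ-linear span of the operators on U^{⊗k} given by the elements of the symmetric inverse semigroup IS_n (i.e., the image of ℂ[IS_n]). -/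
/-!
Encode the pair `(l, i)` of basis indices by its graph
`gr l i = {(0,0)} ∪ {(l_t, i_t)}`, and call a set of pairs *rookish* if it is the graph of a
partial injection. For a rookish `S ∋ (0,0)` the operator of the corresponding rook matrix has
`(l, i)` entry `1` if `gr l i ⊆ S` and `0` otherwise. Möbius inversion over the subsets of `S`
(`PS_mem_span`, by induction on `S`) puts the operators `PS S`, with entry `1` exactly where
`gr l i = S`, into the span of the rook operators.

Let `A` commute with `PI*_k`. Commuting with the idempotents `e_i` and `e_l` attached to the
kernels of `i` and `l` shows `A l i = 0` unless `gr l i` is rookish (`rookish_of_ne_zero`).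
If `gr l i = gr l' i'` is rookish, then some `α` sends `v_i` to `v_{i'}` and `v_l` to `v_{l'}`,
and comparing the `(l', i)` entries of `A α` and `α A` gives `A l i = A l' i'`
(`entry_eq_of_gr_eq`). Hence `A` is a combination of the operators `PS S` with `S` rookish.

Conversely, in the `(l, i)` entry of either product of a rook operator with `α`, at most one
term is nonzero, and a nonzero term on one side can be transported along `α` to the other side
(`transport_left`, `transport_right`).
-/

open scoped BigOperators

namespace RookDual

variable {n k : ℕ}

/-! ### Entries of products with the operators of `PI*_k` -/

lemma pCond_right_unique {α : PDualSym k} {i j j' : Fin k → Option (Fin n)}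
    (h : pCond α i j) (h' : pCond α i j') : j = j' := by
  funext b
  by_cases hb : α.rel (Sum.inr b) (Sum.inr b)
  · obtain ⟨a, ha⟩ := α.meetsL _ hb
    have h1 := h.1 _ _ ha
    have h2 := h'.1 _ _ ha
    simp only [Sum.elim_inl, Sum.elim_inr] at h1 h2
    rw [h1, h2]
  · have h1 := h.2 _ hb
    have h2 := h'.2 _ hb
    simp only [Sum.elim_inr] at h1 h2
    rw [h1, h2]

lemma pCond_left_unique {α : PDualSym k} {m m' l : Fin k → Option (Fin n)}
    (h : pCond α m l) (h' : pCond α m' l) : m = m' := by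
  funext a
  by_cases ha : α.rel (Sum.inl a) (Sum.inl a)
  · obtain ⟨b, hb⟩ := α.meetsR _ ha
    have h1 := h.1 _ _ hb
    have h2 := h'.1 _ _ hb
    simp only [Sum.elim_inl, Sum.elim_inr] at h1 h2
    rw [h1, h2]
  · have h1 := h.2 _ ha
    have h2 := h'.2 _ ha
    simp only [Sum.elim_inl] at h1 h2
    rw [h1, h2]

variable (A : Matrix (Fin k → Option (Fin n)) (Fin k → Option (Fin n)) ℂ)

lemma mul_pOp_apply {α : PDualSym k} {i j : Fin k → Option (Fin n)} (h : pCond α i j)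
    (l : Fin k → Option (Fin n)) : (A * pOp n k α) l i = A l j := by
  rw [Matrix.mul_apply, Finset.sum_eq_single j]
  · simp [pOp, h]
  · intro m _ hm
    have : ¬ pCond α i m := fun h' => hm (pCond_right_unique h' h)
    simp [pOp, this]
  · simp

lemma pOp_mul_apply {α : PDualSym k} {m l : Fin k → Option (Fin n)} (h : pCond α m l)
    (i : Fin k → Option (Fin n)) : (pOp n k α * A) l i = A m i := by
  rw [Matrix.mul_apply, Finset.sum_eq_single m]
  · simp [pOp, h]
  · intro m' _ hm
    have : ¬ pCond α m' l := fun h' => hm (pCond_left_unique h' h)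
    simp [pOp, this]
  · simp

lemma exists_of_mul_pOp_ne_zero {α : PDualSym k} {l i : Fin k → Option (Fin n)}
    (h : (A * pOp n k α) l i ≠ 0) : ∃ j, pCond α i j ∧ A l j ≠ 0 := by
  rw [Matrix.mul_apply] at h
  obtain ⟨j, -, hj⟩ := Finset.exists_ne_zero_of_sum_ne_zero h
  refine ⟨j, ?_, left_ne_zero_of_mul hj⟩
  by_contra hc
  simp [pOp, hc] at hj

lemma exists_of_pOp_mul_ne_zero {α : PDualSym k} {l i : Fin k → Option (Fin n)}
    (h : (pOp n k α * A) l i ≠ 0) : ∃ m, pCond α m l ∧ A m i ≠ 0 := by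
  rw [Matrix.mul_apply] at h
  obtain ⟨j, -, hj⟩ := Finset.exists_ne_zero_of_sum_ne_zero h
  refine ⟨j, ?_, right_ne_zero_of_mul hj⟩
  by_contra hc
  simp [pOp, hc] at hj

/-! ### Rook operators commute with `PI*_k` -/

/-- Given `v_i ↦ v_j` under `α` and `v_j ↦ v_l` under the partial injection with graph `Q`,
the partial injection is defined on `v_i`, and its value is sent to `v_l` by `α`. -/
lemma transport_left {Q : Option (Fin n) → Option (Fin n) → Prop} (h0 : Q none none)
    (hQ : ∀ c c' x, Q c x → Q c' x → c = c') {α : PDualSym k}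
    {l i j : Fin k → Option (Fin n)} (hl : ∀ t, Q (l t) (j t)) (h : pCond α i j) :
    ∃ m, pCond α m l ∧ ∀ t, Q (m t) (i t) := by
  have ex : ∀ a, ∃ c, Q c (i a) := by
    intro a
    by_cases ha : α.rel (Sum.inl a) (Sum.inl a)
    · obtain ⟨b, hb⟩ := α.meetsR _ ha
      have h1 := h.1 _ _ hb
      simp only [Sum.elim_inl, Sum.elim_inr] at h1
      exact ⟨l b, h1 ▸ hl b⟩
    · have h1 := h.2 _ ha
      simp only [Sum.elim_inl] at h1
      exact ⟨none, h1 ▸ h0⟩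
  choose m hm using ex
  have key : ∀ x, Q (Sum.elim m l x) (Sum.elim i j x) := by
    rintro (a | b)
    · exact hm a
    · exact hl b
  refine ⟨m, ⟨fun x y hxy => ?_, fun x hx => ?_⟩, hm⟩
  · exact hQ _ _ _ (key x) (h.1 x y hxy ▸ key y)
  · exact hQ _ _ _ (h.2 x hx ▸ key x) h0

lemma transport_right {Q : Option (Fin n) → Option (Fin n) → Prop} (h0 : Q none none)
    (hQ : ∀ c x x', Q c x → Q c x' → x = x') {α : PDualSym k}
    {l i m : Fin k → Option (Fin n)} (hm : ∀ t, Q (m t) (i t)) (h : pCond α m l) :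
    ∃ j, pCond α i j ∧ ∀ t, Q (l t) (j t) := by
  have ex : ∀ b, ∃ c, Q (l b) c := by
    intro b
    by_cases hb : α.rel (Sum.inr b) (Sum.inr b)
    · obtain ⟨a, ha⟩ := α.meetsL _ hb
      have h1 := h.1 _ _ ha
      simp only [Sum.elim_inl, Sum.elim_inr] at h1
      exact ⟨i a, h1 ▸ hm a⟩
    · have h1 := h.2 _ hb
      simp only [Sum.elim_inr] at h1
      exact ⟨none, h1 ▸ h0⟩
  choose j hj using ex
  have key : ∀ x, Q (Sum.elim m l x) (Sum.elim i j x) := by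
    rintro (a | b)
    · exact hm a
    · exact hj b
  refine ⟨j, ⟨fun x y hxy => ?_, fun x hx => ?_⟩, hj⟩
  · exact hQ _ _ _ (key x) (h.1 x y hxy ▸ key y)
  · exact hQ _ _ _ (h.2 x hx ▸ key x) h0

lemma rookU_zero_or_one {M : Matrix (Fin n) (Fin n) ℂ} (hM : IsRook M) (p q) :
    rookU n M p q = 0 ∨ rookU n M p q = 1 := by
  rcases p with _ | p <;> rcases q with _ | q <;> simp [rookU, hM.1]

lemma rookU_left_unique {M : Matrix (Fin n) (Fin n) ℂ} (hM : IsRook M) (p p' q)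
    (h : rookU n M p q ≠ 0) (h' : rookU n M p' q ≠ 0) : p = p' := by
  rcases p with _ | p <;> rcases p' with _ | p' <;> rcases q with _ | q <;>
    simp_all [rookU]
  exact hM.2.2 _ _ _ h h'

lemma rookU_right_unique {M : Matrix (Fin n) (Fin n) ℂ} (hM : IsRook M) (p q q')
    (h : rookU n M p q ≠ 0) (h' : rookU n M p q' ≠ 0) : q = q' := by
  rcases p with _ | p <;> rcases q with _ | q <;> rcases q' with _ | q' <;>
    simp_all [rookU]
  exact hM.2.1 _ _ _ h h'

lemma tpow_ne_zero_iff {M : Matrix (Fin n) (Fin n) ℂ} (l i : Fin k → Option (Fin n)) :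
    tpow k (rookU n M) l i ≠ 0 ↔ ∀ t, rookU n M (l t) (i t) ≠ 0 := by
  simp [tpow, Finset.prod_eq_zero_iff]

lemma tpow_eq_one {M : Matrix (Fin n) (Fin n) ℂ} (hM : IsRook M)
    {l i : Fin k → Option (Fin n)} (h : ∀ t, rookU n M (l t) (i t) ≠ 0) :
    tpow k (rookU n M) l i = 1 := by
  rw [tpow, Matrix.of_apply]
  exact Finset.prod_eq_one fun t _ => (rookU_zero_or_one hM _ _).resolve_left (h t)

lemma tpow_commute {M : Matrix (Fin n) (Fin n) ℂ} (hM : IsRook M) (α : PDualSym k) :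
    tpow k (rookU n M) * pOp n k α = pOp n k α * tpow k (rookU n M) := by
  ext l i
  have h0 : rookU n M none none ≠ 0 := by simp [rookU]
  by_cases h : (tpow k (rookU n M) * pOp n k α) l i = 0
  · rw [h]
    by_contra hne
    obtain ⟨m, hm, hT⟩ := exists_of_pOp_mul_ne_zero _ (Ne.symm hne)
    obtain ⟨j, hj, hl⟩ := transport_right (Q := fun p q => rookU n M p q ≠ 0) h0
      (rookU_right_unique hM) ((tpow_ne_zero_iff _ _).1 hT) hm
    rw [mul_pOp_apply _ hj] at h
    exact (tpow_ne_zero_iff _ _).2 hl h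
  · obtain ⟨j, hj, hT⟩ := exists_of_mul_pOp_ne_zero _ h
    have hT' := (tpow_ne_zero_iff _ _).1 hT
    obtain ⟨m, hm, hi⟩ := transport_left (Q := fun p q => rookU n M p q ≠ 0) h0
      (fun p p' q => rookU_left_unique hM p p' q) hT' hj
    rw [mul_pOp_apply _ hj, pOp_mul_apply _ hm, tpow_eq_one hM hT', tpow_eq_one hM hi]

/-! ### Graphs and Möbius inversion in the span of the rook operators -/

/-- The graph `{(0,0)} ∪ {(l_t, i_t)}` of a pair of basis indices. -/
def gr (l i : Fin k → Option (Fin n)) : Finset (Option (Fin n) × Option (Fin n)) :=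
  insert (none, none) (Finset.univ.image fun t => (l t, i t))

/-- A set of pairs that is the graph of a partial injection. -/
def Rookish (S : Finset (Option (Fin n) × Option (Fin n))) : Prop :=
  ∀ p ∈ S, ∀ q ∈ S, p.1 = q.1 ↔ p.2 = q.2

lemma mem_gr (l i : Fin k → Option (Fin n)) (t : Fin k) : (l t, i t) ∈ gr l i :=
  Finset.mem_insert_of_mem (Finset.mem_image_of_mem _ (Finset.mem_univ t))

lemma none_mem_gr (l i : Fin k → Option (Fin n)) : (none, none) ∈ gr l i := by
  simp [gr]

/-- The operator whose `(l, i)` entry is `1` if `gr l i = S` and `0` otherwise. -/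
def PS (k : ℕ) (S : Finset (Option (Fin n) × Option (Fin n))) :
    Matrix (Fin k → Option (Fin n)) (Fin k → Option (Fin n)) ℂ :=
  Matrix.of fun l i => if gr l i = S then 1 else 0

/-- The rook matrix with graph `S`. -/
def rookOf (S : Finset (Option (Fin n) × Option (Fin n))) : Matrix (Fin n) (Fin n) ℂ :=
  Matrix.of fun a b => if (some a, some b) ∈ S then 1 else 0

lemma isRook_rookOf {S : Finset (Option (Fin n) × Option (Fin n))} (hS : Rookish S) :
    IsRook (rookOf S) := by
  refine ⟨fun i j => ?_, fun i j j' h h' => ?_, fun i i' j h h' => ?_⟩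
  · by_cases h : (some i, some j) ∈ S <;> simp [rookOf, h]
  · simp [rookOf] at h h'
    simpa using hS _ h _ h'
  · simp [rookOf] at h h'
    simpa using hS _ h _ h'

lemma rookU_rookOf {S : Finset (Option (Fin n) × Option (Fin n))} (hS : Rookish S)
    (h0 : (none, none) ∈ S) (p q) :
    rookU n (rookOf S) p q = if (p, q) ∈ S then 1 else 0 := by
  rcases p with _ | p <;> rcases q with _ | q
  · simp [rookU, h0]
  · have : (none, some q) ∉ S := fun h => by simpa using hS _ h _ h0
    simp [rookU, this]
  · have : (some p, none) ∉ S := fun h => by simpa using hS _ h _ h0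
    simp [rookU, this]
  · simp [rookU, rookOf]

lemma tpow_rookOf {S : Finset (Option (Fin n) × Option (Fin n))} (hS : Rookish S)
    (h0 : (none, none) ∈ S) :
    tpow k (rookU n (rookOf S)) = ∑ T ∈ S.powerset, PS k T := by
  ext l i
  have h1 : (∑ T ∈ S.powerset, PS k T) l i = if gr l i ⊆ S then 1 else 0 := by
    simp [Matrix.sum_apply, PS]
  rw [h1]
  have h2 : gr l i ⊆ S ↔ ∀ t, (l t, i t) ∈ S := by
    simp [gr, h0, Finset.subset_iff]
  simp only [tpow, Matrix.of_apply, rookU_rookOf hS h0, h2]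
  split_ifs with h
  · exact Finset.prod_eq_one fun t _ => by simp [h t]
  · push Not at h
    obtain ⟨t, ht⟩ := h
    exact Finset.prod_eq_zero (Finset.mem_univ t) (by simp [ht])

lemma PS_mem_span (S : Finset (Option (Fin n) × Option (Fin n))) (hS : Rookish S) :
    PS k S ∈ Submodule.span ℂ
      (Set.range (fun σ : RookMonoid n => tpow k (rookU n σ.val))) := by
  induction S using Finset.strongInduction with
  | H S ih =>
    by_cases h0 : (none, none) ∈ S
    · have hsum := tpow_rookOf (k := k) hS h0
      rw [← Finset.sum_erase_add _ _ (Finset.mem_powerset_self S)] at hsum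
      rw [eq_sub_of_add_eq' hsum.symm]
      refine Submodule.sub_mem _ (Submodule.subset_span ⟨⟨_, isRook_rookOf hS⟩, rfl⟩)
        (Submodule.sum_mem _ fun T hT => ?_)
      rw [Finset.mem_erase, Finset.mem_powerset] at hT
      exact ih T (hT.2.ssubset_of_ne hT.1)
        fun p hp q hq => hS p (hT.2 hp) q (hT.2 hq)
    · have : PS k S = 0 := by
        ext l i
        have : gr l i ≠ S := fun h => h0 (h ▸ none_mem_gr l i)
        simp [PS, this]
      rw [this]
      exact Submodule.zero_mem _

/-! ### Entries of an operator commuting with `PI*_k` -/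

/-- The element of `PI*_k` whose blocks are the fibres `{a : i_a = x} ∪ {b' : i'_b = x}`
over the nonzero values `x`; it sends `v_i` to `v_{i'}`. -/
def link (i i' : Fin k → Option (Fin n)) (h : ∀ a, i a ≠ none → ∃ b, i' b = i a)
    (h' : ∀ b, i' b ≠ none → ∃ a, i a = i' b) : PDualSym k where
  rel x y := Sum.elim i i' x = Sum.elim i i' y ∧ Sum.elim i i' x ≠ none
  symm := fun ⟨h1, h2⟩ => ⟨h1.symm, h1 ▸ h2⟩
  trans := fun ⟨h1, h2⟩ ⟨h3, _⟩ => ⟨h1.trans h3, h2⟩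
  meetsL := by
    rintro (a | b) ⟨-, hx⟩
    · exact ⟨a, rfl, hx⟩
    · obtain ⟨a, ha⟩ := h' b hx
      exact ⟨a, ha.symm, hx⟩
  meetsR := by
    rintro (a | b) ⟨-, hx⟩
    · obtain ⟨b, hb⟩ := h a hx
      exact ⟨b, hb.symm, hx⟩
    · exact ⟨b, rfl, hx⟩

lemma pCond_link (i i' : Fin k → Option (Fin n)) (h h') : pCond (link i i' h h') i i' := by
  refine ⟨fun x y hxy => hxy.1, fun x hx => ?_⟩
  by_contra hc
  exact hx ⟨rfl, hc⟩

/-- The idempotent of `PI*_k` attached to the kernel of `i`. -/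
def idem (i : Fin k → Option (Fin n)) : PDualSym k :=
  link i i (fun a _ => ⟨a, rfl⟩) (fun a _ => ⟨a, rfl⟩)

lemma pCond_idem (i : Fin k → Option (Fin n)) : pCond (idem i) i i :=
  pCond_link _ _ _ _

lemma rookish_of_factor {l i : Fin k → Option (Fin n)}
    (h1 : ∀ s t, i s = i t → l s = l t) (h2 : ∀ t, i t = none → l t = none)
    (h3 : ∀ s t, l s = l t → i s = i t) (h4 : ∀ t, l t = none → i t = none) :
    Rookish (gr l i) := by
  intro p hp q hq
  simp only [gr, Finset.mem_insert, Finset.mem_image, Finset.mem_univ, true_and] at hp hq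
  rcases hp with rfl | ⟨s, rfl⟩ <;> rcases hq with rfl | ⟨t, rfl⟩
  · simp
  · exact ⟨fun h => (h4 t h.symm).symm, fun h => (h2 t h.symm).symm⟩
  · exact ⟨h4 s, h2 s⟩
  · exact ⟨h3 s t, h1 s t⟩

lemma idem_right {i m l : Fin k → Option (Fin n)} (h : pCond (idem i) m l) :
    (∀ s t, i s = i t → l s = l t) ∧ ∀ t, i t = none → l t = none := by
  have hn : ∀ t, i t = none → l t = none := fun t ht =>
    h.2 (Sum.inr t) fun hr => hr.2 ht
  refine ⟨fun s t hst => ?_, hn⟩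
  by_cases hs : i s = none
  · rw [hn s hs, hn t (hst ▸ hs)]
  · exact h.1 (Sum.inr s) (Sum.inr t) ⟨hst, hs⟩

lemma idem_left {i m l : Fin k → Option (Fin n)} (h : pCond (idem i) m l) :
    (∀ s t, i s = i t → m s = m t) ∧ ∀ t, i t = none → m t = none := by
  have hn : ∀ t, i t = none → m t = none := fun t ht =>
    h.2 (Sum.inl t) fun hr => hr.2 ht
  refine ⟨fun s t hst => ?_, hn⟩
  by_cases hs : i s = none
  · rw [hn s hs, hn t (hst ▸ hs)]
  · exact h.1 (Sum.inl s) (Sum.inl t) ⟨hst, hs⟩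

variable {A}

lemma rookish_of_ne_zero (hA : ∀ α : PDualSym k, A * pOp n k α = pOp n k α * A)
    {l i : Fin k → Option (Fin n)} (h : A l i ≠ 0) : Rookish (gr l i) := by
  obtain ⟨m, hm, -⟩ := exists_of_pOp_mul_ne_zero (α := idem i) (l := l) (i := i) A (by
    rwa [← hA, mul_pOp_apply A (pCond_idem i)])
  obtain ⟨j, hj, -⟩ := exists_of_mul_pOp_ne_zero (α := idem l) (l := l) (i := i) A (by
    rwa [hA, pOp_mul_apply A (pCond_idem l)])
  exact rookish_of_factor (idem_right hm).1 (idem_right hm).2 (idem_left hj).1 (idem_left hj).2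

lemma exists_of_gr_eq {l i l' i' : Fin k → Option (Fin n)} (h : gr l i = gr l' i')
    (a : Fin k) (ha : i a ≠ none) : ∃ b, i' b = i a := by
  have := mem_gr l i a
  rw [h] at this
  simp only [gr, Finset.mem_insert, Finset.mem_image, Finset.mem_univ, true_and,
    Prod.mk.injEq] at this
  rcases this with ⟨-, h⟩ | ⟨b, -, h⟩
  · exact absurd h ha
  · exact ⟨b, h⟩

lemma entry_eq_of_gr_eq (hA : ∀ α : PDualSym k, A * pOp n k α = pOp n k α * A)
    {l i l' i' : Fin k → Option (Fin n)} (hr : Rookish (gr l i)) (h : gr l i = gr l' i') :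
    A l i = A l' i' := by
  set α := link i i' (exists_of_gr_eq h) (exists_of_gr_eq h.symm) with hα
  have key : ∀ x, (Sum.elim l l' x, Sum.elim i i' x) ∈ gr l i := by
    rintro (a | b)
    · exact mem_gr l i a
    · exact h ▸ mem_gr l' i' b
  have hi : pCond α i i' := pCond_link _ _ _ _
  have hl : pCond α l l' :=
    ⟨fun x y hxy => (hr _ (key x) _ (key y)).2 hxy.1,
     fun x hx => (hr _ (key x) _ (none_mem_gr l i)).2 (hi.2 x hx)⟩
  rw [← pOp_mul_apply A hl i, ← hA, mul_pOp_apply A hi]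

lemma mem_span_of_commute (hA : ∀ α : PDualSym k, A * pOp n k α = pOp n k α * A) :
    A ∈ Submodule.span ℂ
      (Set.range (fun σ : RookMonoid n => tpow k (rookU n σ.val))) := by
  classical
  -- `c S` is the common value of the entries of `A` with graph `S`, or `0` for non-rookish `S`.
  have ex : ∀ S : Finset (Option (Fin n) × Option (Fin n)), ∃ c : ℂ,
      (¬ Rookish S → c = 0) ∧ ∀ l i, gr l i = S → A l i = c := by
    intro S
    by_cases hS : Rookish S
    · by_cases hex : ∃ l i : Fin k → Option (Fin n), gr l i = S
      · obtain ⟨l, i, rfl⟩ := hex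
        exact ⟨A l i, fun h => absurd hS h,
          fun l' i' h => (entry_eq_of_gr_eq hA hS h.symm).symm⟩
      · exact ⟨0, fun _ => rfl, fun l i h => absurd ⟨l, i, h⟩ hex⟩
    · refine ⟨0, fun _ => rfl, fun l i h => ?_⟩
      by_contra hne
      exact hS (h ▸ rookish_of_ne_zero hA hne)
  choose c hc0 hc using ex
  have hsum : A = ∑ S, c S • PS k S := by
    ext l i
    simp [Matrix.sum_apply, PS, hc _ l i rfl]
  rw [hsum]
  refine Submodule.sum_mem _ fun S _ => ?_
  by_cases hS : Rookish S
  · exact Submodule.smul_mem _ _ (PS_mem_span S hS)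
  · rw [hc0 S hS, zero_smul]
    exact Submodule.zero_mem _

end RookDual

/-- Second Schur-Weyl duality, part (iii): the centralizer of the PI*_k-action on
U^{⊗k} is exactly the linear span of the operators coming from IS_n. -/
theorem end_pdualSym_eq_span_isn (n k : ℕ) (hn : 0 < n) (hk : 0 < k) :
    {A : Matrix (Fin k → Option (Fin n)) (Fin k → Option (Fin n)) ℂ |
        ∀ α : PDualSym k, A * pOp n k α = pOp n k α * A} =
      (Submodule.span ℂ
          (Set.range (fun σ : RookMonoid n => tpow k (rookU n σ.val))) : Set _) := by
  ext A
  refine ⟨fun hA => RookDual.mem_span_of_commute hA, fun hA α => ?_⟩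
  induction hA using Submodule.span_induction with
  | mem x hx =>
    obtain ⟨σ, rfl⟩ := hx
    exact RookDual.tpow_commute σ.2 α
  | zero => simp
  | add x y _ _ hx hy => rw [add_mul, mul_add, hx, hy]
  | smul c x _ hx => rw [smul_mul_assoc, mul_smul_comm, hx]
end

section
/- For all positive integers n and k, the representation of the partial dual symmetric inverse semigroup PI*_k on U^{⊗k} is faithful: distinct elements of PI*_k induce distinct linear operators on U^{⊗k}. -/
/-!
The operator of `α` determines which labellings of K̃ are compatible with `α`, that is, constant on
the blocks of `α` and `0` off its domain. Since `n ≥ 1` there is a nonzero label, and the indicator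
labelling of the block of `x` in `α` is compatible with `α` (`pCond_block`). If `β` has the same
operator, this labelling is compatible with `β` too. As it is nonzero at `x`, the point `x` lies in
the domain of `β`; as it is constant on blocks of `β`, the `β`-block of `x` is contained in the
`α`-block. Exchanging `α` and `β` shows that the two relations coincide.
-/

open scoped BigOperators

theorem pCond_iff_of_pOp_eq {n k : ℕ} {α β : PDualSym k} (h : pOp n k α = pOp n k β)
    (i l : Fin k → Option (Fin n)) : pCond α i l ↔ pCond β i l := by
  have h' := congrFun (congrFun h l) i
  simp only [pOp, Matrix.of_apply] at h'
  by_cases ha : pCond α i l <;> by_cases hb : pCond β i l <;> simp_all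

open Classical in
/-- The labelling of K̃ with value `c` on the block of `x` in `α` and `0` (that is, `none`)
elsewhere; it is identically `none` if `x` is not in the domain of `α`. -/
noncomputable def blockLabel {n k : ℕ} (c : Fin n) (α : PDualSym k) (x : Fin k ⊕ Fin k) :
    Fin k ⊕ Fin k → Option (Fin n) :=
  fun y => if α.rel x y then some c else none

theorem pCond_block {n k : ℕ} (c : Fin n) (α : PDualSym k) (x : Fin k ⊕ Fin k) :
    pCond α (blockLabel c α x ∘ Sum.inl) (blockLabel c α x ∘ Sum.inr) := by
  simp only [pCond, Sum.elim_comp_inl_inr]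
  refine ⟨fun y z hyz => ?_, fun y hy => ?_⟩
  · have : α.rel x y ↔ α.rel x z := ⟨fun h => α.trans h hyz, fun h => α.trans h (α.symm hyz)⟩
    by_cases hy : α.rel x y
    · simp [blockLabel, hy, this.1 hy]
    · simp [blockLabel, hy, mt this.2 hy]
  · have : ¬ α.rel x y := fun h => hy (α.trans (α.symm h) h)
    simp [blockLabel, this]

/-- For operators that agree, the domain of `α` is contained in that of `β`, and on the domain
of `α` the blocks of `β` are contained in those of `α`. -/
theorem rel_of_pOp_eq {n k : ℕ} (c : Fin n) {α β : PDualSym k} (h : pOp n k α = pOp n k β)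
    {x : Fin k ⊕ Fin k} (hx : α.rel x x) : β.rel x x ∧ ∀ y, β.rel x y → α.rel x y := by
  have hβ := (pCond_iff_of_pOp_eq h _ _).1 (pCond_block c α x)
  simp only [pCond, Sum.elim_comp_inl_inr] at hβ
  refine ⟨?_, fun y hxy => ?_⟩
  · by_contra hn
    simpa [blockLabel, hx] using hβ.2 x hn
  · by_contra hn
    simpa [blockLabel, hx, hn] using hβ.1 x y hxy

/-- The representation of PI*_k on U^{⊗k} is faithful. -/
theorem pdualSym_rep_faithful (n k : ℕ) (hn : 0 < n) (hk : 0 < k) :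
    Function.Injective (pOp n k) := by
  have key : ∀ {α β : PDualSym k}, pOp n k α = pOp n k β → ∀ x y, α.rel x y → β.rel x y := by
    intro α β h x y hxy
    have hβ := (rel_of_pOp_eq ⟨0, hn⟩ h (α.trans hxy (α.symm hxy))).1
    exact (rel_of_pOp_eq ⟨0, hn⟩ h.symm hβ).2 y hxy
  intro α β h
  have hrel : α.rel = β.rel := by
    funext x y
    exact propext ⟨key h x y, key h.symm x y⟩
  cases α; cases β; simpa using hrel
end

section
/- For all positive integers n and k, the representation of the semigroup algebra ℂ[IS_n] on U^{⊗k} is faithful if and only if k ≥ n; concretely, the family of operators on U^{⊗k} induced by the elements of IS_n (including the zero element, which acts nontrivially on U^{⊗k}) is linearly independent over ℂ if and only if k ≥ n. -/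
/-!
The entry of `tpow k (rookU n τ)` at a pair of multi-indices `(l, i)` is 1 or 0 according to whether
the pairs `(l t, i t)` all lie in the graph of `τ`, with `(none, none)` always allowed.

If `n ≤ k`, the graph of any `σ` has at most `k` points and can be listed by some `(l, i)`, padded
with `(none, none)` (`exists_listing`). The entry of `τ` there is nonzero only when `σ ⊆ τ`, so the
family is triangular with respect to inclusion of graphs (`linearIndependent_of_le`).

If `k < n`, the alternating sum `∑_D (-1)^|D| id_D` over all partial identities is killed: every
`i` misses some `a`, and toggling `a` in `D` flips the sign without changing the entry
(`alternating_sum_eq_zero`).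
-/

open scoped BigOperators

/-- The partial identity on `D`, as a diagonal rook matrix. -/
noncomputable def partialId {n : ℕ} (D : Finset (Fin n)) : RookMonoid n :=
  ⟨Matrix.diagonal fun a => if a ∈ D then 1 else 0, by
    refine ⟨fun i j => ?_, fun i j j' h h' => ?_, fun i i' j h h' => ?_⟩
    · simp only [Matrix.diagonal_apply]; split_ifs <;> simp
    · simp only [Matrix.diagonal_apply] at h h'; grind
    · simp only [Matrix.diagonal_apply] at h h'; grind⟩

lemma partialId_injective {n : ℕ} : Function.Injective (partialId (n := n)) := by
  intro D E h
  ext a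
  have h1 := congrFun (congrFun (congrArg Subtype.val h) a) a
  simp only [partialId, Matrix.diagonal_apply_eq] at h1
  by_cases hD : a ∈ D <;> by_cases hE : a ∈ E <;> simp_all

/-- The entries of a partial identity outside the column of `a` do not depend on whether `a` lies
in its domain. -/
lemma rookU_partialId_congr {n : ℕ} {D E : Finset (Fin n)} {a : Fin n}
    (h : ∀ b, b ≠ a → (b ∈ D ↔ b ∈ E)) (x y : Option (Fin n)) (hy : y ≠ some a) :
    rookU n (partialId D).val x y = rookU n (partialId E).val x y := by
  rcases x with _ | x <;> rcases y with _ | y <;> simp only [rookU, Matrix.of_apply]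
  have hy' : y ≠ a := fun e => hy (by rw [e])
  simp only [partialId, Matrix.diagonal_apply]
  by_cases hxy : x = y
  · subst hxy; simp [h x hy']
  · simp [hxy]

lemma alternating_sum_eq_zero {n k : ℕ} (hkn : k < n) :
    ∑ D : Finset (Fin n), (-1 : ℂ) ^ D.card • tpow k (rookU n (partialId D).val) = 0 := by
  ext l i
  obtain ⟨a, ha⟩ : ∃ a : Fin n, ∀ t, i t ≠ some a := by
    by_contra! hcon
    choose t ht using hcon
    have inj : Function.Injective t := fun a b hab => by
      have := ht a
      rw [hab, ht b] at this
      exact (Option.some.inj this).symm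
    have := Fintype.card_le_of_injective t inj
    simp at this
    omega
  simp only [Matrix.sum_apply, Matrix.smul_apply, Matrix.zero_apply, tpow, Matrix.of_apply,
    smul_eq_mul]
  have key : ∀ D E : Finset (Fin n), (∀ b, b ≠ a → (b ∈ D ↔ b ∈ E)) →
      ∏ t : Fin k, rookU n (partialId D).val (l t) (i t) =
        ∏ t : Fin k, rookU n (partialId E).val (l t) (i t) := fun D E h =>
    Finset.prod_congr rfl fun t _ => rookU_partialId_congr h _ _ (ha t)
  refine Finset.sum_involution (fun D _ => if a ∈ D then D.erase a else insert a D)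
    (fun D _ => ?_) (fun D _ _ => ?_) (fun _ _ => Finset.mem_univ _) (fun D _ => ?_)
  · split_ifs with h
    · rw [key (D.erase a) D (by grind), ← Finset.card_erase_add_one h, pow_succ]
      ring
    · rw [key (insert a D) D (by grind), Finset.card_insert_of_notMem h, pow_succ]
      ring
  · split_ifs with h
    · exact fun e => Finset.erase_eq_self.mp e h
    · exact fun e => h (e ▸ Finset.mem_insert_self a D)
  · by_cases h : a ∈ D <;> simp [h]

/-- The graph of a rook matrix can be listed, up to padding, by `k ≥ n` pairs: the pair in
position `t < n` comes from row `t`. -/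
lemma exists_listing {n k : ℕ} (hnk : n ≤ k) (σ : RookMonoid n) :
    ∃ p : Fin k → Option (Fin n) × Option (Fin n),
      (∀ t, p t = (none, none) ∨ ∃ a b, σ.val a b ≠ 0 ∧ p t = (some a, some b)) ∧
      ∀ a b, σ.val a b ≠ 0 → ∃ t, p t = (some a, some b) := by
  have h : ∀ t : Fin k, ∃ q : Option (Fin n) × Option (Fin n),
      (q = (none, none) ∨ ∃ a b, σ.val a b ≠ 0 ∧ q = (some a, some b)) ∧
      ∀ a b, σ.val a b ≠ 0 → a.val = t.val → q = (some a, some b) := by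
    intro t
    by_cases hex : ∃ a b, σ.val a b ≠ 0 ∧ a.val = t.val
    · obtain ⟨a, b, hab, hat⟩ := hex
      refine ⟨(some a, some b), Or.inr ⟨a, b, hab, rfl⟩, fun a' b' hab' hat' => ?_⟩
      obtain rfl : a = a' := Fin.ext (hat.trans hat'.symm)
      rw [σ.property.2.1 a b b' hab hab']
    · push Not at hex
      exact ⟨(none, none), Or.inl rfl, fun a b hab hat => absurd hat (hex a b hab)⟩
  choose p hp hp' using h
  exact ⟨p, hp, fun a b hab => ⟨Fin.castLE hnk a, hp' _ a b hab rfl⟩⟩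

/-- The graph of a rook matrix: the positions of its nonzero entries. -/
noncomputable def graph {n : ℕ} (σ : RookMonoid n) : Finset (Fin n × Fin n) :=
  Finset.univ.filter fun p => σ.val p.1 p.2 ≠ 0

lemma graph_injective {n : ℕ} : Function.Injective (graph (n := n)) := by
  intro σ τ h
  apply Subtype.ext
  ext a b
  have hab : (a, b) ∈ graph σ ↔ (a, b) ∈ graph τ := by rw [h]
  simp only [graph, Finset.mem_filter, Finset.mem_univ, true_and] at hab
  rcases σ.property.1 a b with h1 | h1 <;> rcases τ.property.1 a b with h2 | h2 <;>
    simp_all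

lemma linearIndependent_of_le {n k : ℕ} (hnk : n ≤ k) :
    LinearIndependent ℂ (fun σ : RookMonoid n => tpow k (rookU n σ.val)) := by
  classical
  rw [linearIndependent_iff']
  intro s g hg
  by_contra! hcon
  obtain ⟨σ₀, hσ₀, hgσ₀⟩ := hcon
  -- Among the elements with nonzero coefficient, `σ` has a graph of maximal size.
  obtain ⟨σ, hσ, hmax⟩ := Finset.exists_max_image (s.filter fun τ => g τ ≠ 0)
    (fun τ => (graph τ).card) ⟨σ₀, by simp [hσ₀, hgσ₀]⟩
  rw [Finset.mem_filter] at hσ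
  obtain ⟨p, hp, hp'⟩ := exists_listing hnk σ
  have hself : tpow k (rookU n σ.val) (fun t => (p t).1) (fun t => (p t).2) = 1 := by
    simp only [tpow, Matrix.of_apply]
    refine Finset.prod_eq_one fun t _ => ?_
    rcases hp t with h | ⟨a, b, hab, h⟩
    · simp [h, rookU]
    · simpa [h, rookU] using (σ.property.1 a b).resolve_left hab
  have hother : ∀ τ ∈ s, τ ≠ σ →
      g τ * tpow k (rookU n τ.val) (fun t => (p t).1) (fun t => (p t).2) = 0 := by
    intro τ hτ hne
    by_contra hnz
    obtain ⟨hgτ, hent⟩ := mul_ne_zero_iff.mp hnz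
    simp only [tpow, Matrix.of_apply, Finset.prod_ne_zero_iff] at hent
    have hsub : graph σ ⊆ graph τ := by
      rintro ⟨a, b⟩ hab
      simp only [graph, Finset.mem_filter, Finset.mem_univ, true_and] at hab ⊢
      obtain ⟨t, ht⟩ := hp' a b hab
      simpa [ht, rookU] using hent t (Finset.mem_univ t)
    have hle := hmax τ (by simp [hτ, hgτ])
    exact hne (graph_injective (Finset.eq_of_subset_of_card_le hsub hle)).symm
  have hentry := congrFun (congrFun hg fun t => (p t).1) fun t => (p t).2
  simp only [Matrix.sum_apply, Matrix.smul_apply, Matrix.zero_apply, smul_eq_mul] at hentry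
  rw [Finset.sum_eq_single_of_mem σ hσ.1 hother, hself, mul_one] at hentry
  exact hσ.2 hentry

/-- The zero element of IS_n acts nontrivially on U^{⊗k}, and the representation
of ℂ[IS_n] on U^{⊗k} is faithful iff k ≥ n: the operators induced by all
elements of IS_n are linearly independent iff k ≥ n. -/
theorem isn_algebra_on_U_faithful_iff (n k : ℕ) (hn : 0 < n) (hk : 0 < k) :
    tpow k (rookU n (rookZero n).val) ≠ 0 ∧
      (LinearIndependent ℂ (fun σ : RookMonoid n => tpow k (rookU n σ.val)) ↔
        n ≤ k) := by
  refine ⟨fun h => ?_, fun h => ?_, linearIndependent_of_le⟩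
  -- The vector `e₀ ⊗ ⋯ ⊗ e₀` is fixed.
  · have := congrFun (congrFun h fun _ => none) fun _ => none
    simp [tpow, rookU] at this
  · by_contra! hkn
    have hli := h.comp partialId partialId_injective
    have := Fintype.linearIndependent_iff.mp hli (fun D => (-1) ^ D.card)
      (alternating_sum_eq_zero hkn) ∅
    simp at this
end

section
/- For all positive integers n and k, the representation of the semigroup algebra ℂ[PI*_k] on U^{⊗k} is faithful if and only if k ≤ n; concretely, the family of operators on U^{⊗k} induced by the elements of the partial dual symmetric inverse semigroup PI*_k is linearly independent over ℂ if and only if k ≤ n. -/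
/-!
Write `s = Sum.elim i l` for the labelling of `K̃` attached to a matrix entry `(l, i)`. Its
*kernel* is the partial equivalence relation whose blocks are the level sets of the values of `s`
other than `none`. An element `β` has entry `1` at `(l, i)` exactly when `β` refines that kernel,
in the sense of the order of partitions of `K̃ ⊔ {0}` in which the points outside the domain
form one block together with `0` (`pCond_iff_refines`). So, up to repeated and zero entries, the
operators `pOp n k β` are rows of the zeta matrix of a finite poset.

If `k ≤ n`, every `α` is the kernel of a labelling, since `α` has at most `k` blocks
(`exists_labelling`). The whole zeta matrix occurs, and its triangularity gives independence.

If `n < k`, every entry at which some operator is nonzero has its kernel in `PI*_k`, but this kernel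
is never the identity, which has `k > n` blocks. Hence all operators are determined by the columns
of the zeta matrix other than that of the identity, one fewer than the number of
operators, and a linear relation exists.
-/


open scoped BigOperators

namespace PDualSym

variable {k : ℕ}

theorem ext_rel {α β : PDualSym k} (h : ∀ x y, α.rel x y ↔ β.rel x y) : α = β := by
  have h' : α.rel = β.rel := by
    funext x y
    exact propext (h x y)
  cases α
  cases β
  simpa using h'

theorem rel_left (α : PDualSym k) {x y} (h : α.rel x y) : α.rel x x :=
  α.trans h (α.symm h)

theorem rel_right (α : PDualSym k) {x y} (h : α.rel x y) : α.rel y y :=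
  α.trans (α.symm h) h

/-- `Refines β α` says that `β` is finer than `α` when both are completed to partitions of
`K̃ ⊔ {0}` by putting all points outside the domain into the block of `0`. -/
def Refines (β α : PDualSym k) : Prop :=
  (∀ x y, β.rel x y → α.rel x y ∨ (¬ α.rel x x ∧ ¬ α.rel y y)) ∧
  (∀ x, ¬ β.rel x x → ¬ α.rel x x)

/-- The refinement order on `PI*_k`. -/
@[reducible]
def refinementOrder (k : ℕ) : PartialOrder (PDualSym k) where
  le := Refines
  le_refl α := ⟨fun _ _ h => Or.inl h, fun _ h => h⟩
  le_trans α β γ h₁ h₂ := by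
    refine ⟨fun x y h => ?_, fun x h => h₂.2 x (h₁.2 x h)⟩
    rcases h₁.1 x y h with h' | ⟨hx, hy⟩
    · exact h₂.1 x y h'
    · exact Or.inr ⟨h₂.2 x hx, h₂.2 y hy⟩
  le_antisymm α β h₁ h₂ := by
    refine ext_rel fun x y => ⟨fun h => ?_, fun h => ?_⟩
    · exact (h₁.1 x y h).resolve_right fun h' => h₂.2 x h'.1 (α.rel_left h)
    · exact (h₂.1 x y h).resolve_right fun h' => h₁.2 x h'.1 (β.rel_left h)

/-- The identity of `PI*_k`, with the `k` blocks `{a, a'}`. -/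
def identity (k : ℕ) : PDualSym k where
  rel x y := Sum.elim id id x = Sum.elim id id y
  symm h := h.symm
  trans h h' := h.trans h'
  meetsL x _ := ⟨Sum.elim id id x, rfl⟩
  meetsR x _ := ⟨Sum.elim id id x, rfl⟩

/-- `α` is the kernel of the labelling `s`: its blocks are the level sets of the values of `s`
other than `none`. -/
def IsKernel {n : ℕ} (α : PDualSym k) (s : Fin k ⊕ Fin k → Option (Fin n)) : Prop :=
  ∀ x y, α.rel x y ↔ s x = s y ∧ s x ≠ none

theorem pCond_iff_refines {n : ℕ} {α : PDualSym k} {i l : Fin k → Option (Fin n)}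
    (h : α.IsKernel (Sum.elim i l)) (β : PDualSym k) : pCond β i l ↔ Refines β α := by
  have hd : ∀ x, α.rel x x ↔ Sum.elim i l x ≠ none := fun x => by simp [h x x]
  constructor
  · rintro ⟨h₁, h₂⟩
    refine ⟨fun x y hxy => ?_, fun x hx => ?_⟩
    · have e := h₁ x y hxy
      by_cases hx : Sum.elim i l x = none
      · exact Or.inr ⟨fun h' => (hd x).1 h' hx, fun h' => (hd y).1 h' (e ▸ hx)⟩
      · exact Or.inl ((h x y).2 ⟨e, hx⟩)
    · exact fun h' => (hd x).1 h' (h₂ x hx)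
  · rintro ⟨h₁, h₂⟩
    refine ⟨fun x y hxy => ?_, fun x hx => ?_⟩
    · rcases h₁ x y hxy with h' | ⟨hx, hy⟩
      · exact ((h x y).1 h').1
      · rw [hd, not_not] at hx hy
        rw [hx, hy]
    · have := h₂ x hx
      rwa [hd, not_not] at this

/-- If some operator has a nonzero entry at `(l, i)`, then the kernel of this labelling lies in
`PI*_k`: each of its blocks contains a block of `β`, hence meets both `K` and `K'`. -/
theorem exists_isKernel {n : ℕ} {β : PDualSym k} {i l : Fin k → Option (Fin n)}
    (h : pCond β i l) : ∃ α : PDualSym k, α.IsKernel (Sum.elim i l) := by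
  have hdom : ∀ x, Sum.elim i l x ≠ none → β.rel x x := fun x hx => by
    by_contra h'
    exact hx (h.2 x h')
  refine ⟨⟨fun x y => Sum.elim i l x = Sum.elim i l y ∧ Sum.elim i l x ≠ none, ?_, ?_, ?_, ?_⟩,
    fun _ _ => Iff.rfl⟩
  · rintro x y ⟨e, hx⟩
    exact ⟨e.symm, e ▸ hx⟩
  · rintro x y z ⟨e, hx⟩ ⟨e', -⟩
    exact ⟨e.trans e', hx⟩
  · rintro x ⟨-, hx⟩
    obtain ⟨a, ha⟩ := β.meetsL x (hdom x hx)
    exact ⟨a, h.1 _ _ ha, hx⟩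
  · rintro x ⟨-, hx⟩
    obtain ⟨b, hb⟩ := β.meetsR x (hdom x hx)
    exact ⟨b, h.1 _ _ hb, hx⟩

/-- Each block is labelled by a chosen one of its elements in `K`; this requires `k ≤ n`. -/
theorem exists_labelling {n : ℕ} (hkn : k ≤ n) (α : PDualSym k) :
    ∃ i l : Fin k → Option (Fin n), α.IsKernel (Sum.elim i l) := by
  classical
  have key : ∃ s : Fin k ⊕ Fin k → Option (Fin n), α.IsKernel s := by
    have hne : Nonempty (Fin k ⊕ Fin k) → Nonempty (Fin k) := by
      rintro ⟨a | a⟩ <;> exact ⟨a⟩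
    -- `epsilon` depends only on the predicate, so related points get the same representative
    let r : Fin k ⊕ Fin k → Fin k := fun x =>
      @Classical.epsilon _ (hne ⟨x⟩) (fun a => α.rel x (Sum.inl a))
    have hr : ∀ x, α.rel x x → α.rel x (Sum.inl (r x)) := fun x hx =>
      Classical.epsilon_spec (α.meetsL x hx)
    have hrr : ∀ x y, α.rel x y → r x = r y := fun x y hxy => by
      have : (fun a => α.rel x (Sum.inl a)) = fun a => α.rel y (Sum.inl a) := by
        funext a
        exact propext ⟨α.trans (α.symm hxy), α.trans hxy⟩
      simp only [r, this]
    refine ⟨fun x => if α.rel x x then some (Fin.castLE hkn (r x)) else none, fun x y => ?_⟩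
    constructor
    · intro h
      simp [α.rel_left h, α.rel_right h, hrr x y h]
    · rintro ⟨e, hx⟩
      by_cases hxx : α.rel x x
      · by_cases hyy : α.rel y y
        · have e' : r x = r y := by simpa [hxx, hyy] using e
          have := hr x hxx
          rw [e'] at this
          exact α.trans this (α.symm (hr y hyy))
        · simp [hxx, hyy] at e
      · simp [hxx] at hx
  obtain ⟨s, hs⟩ := key
  refine ⟨s ∘ Sum.inl, s ∘ Sum.inr, ?_⟩
  rwa [Sum.elim_comp_inl_inr]

/-- A labelling with kernel the identity embeds `K` into the `n` labels. -/
theorem not_isKernel_identity {n : ℕ} (hnk : n < k) (s : Fin k ⊕ Fin k → Option (Fin n)) :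
    ¬ (identity k).IsKernel s := by
  intro h
  have hsome : ∀ a : Fin k, ∃ b, s (Sum.inl a) = some b := fun a =>
    Option.ne_none_iff_exists'.1 ((h (Sum.inl a) (Sum.inl a)).1 rfl).2
  choose f hf using hsome
  have hinj : Function.Injective f := fun a a' e =>
    (h (Sum.inl a) (Sum.inl a')).2 ⟨by rw [hf, hf, e], by simp [hf]⟩
  have := Fintype.card_le_of_injective f hinj
  simp at this
  omega

theorem linearIndependent_pOp {n : ℕ} (hkn : k ≤ n) : LinearIndependent ℂ (pOp n k) := by
  classical
  let _ := Fintype.ofFinite (PDualSym k)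
  let _ := refinementOrder k
  rw [Fintype.linearIndependent_iff]
  intro c hc α
  induction α using WellFoundedLT.induction with
  | ind α ih =>
  obtain ⟨i, l, h⟩ := exists_labelling hkn α
  -- at an entry with kernel `α` only the terms of elements finer than `α` survive
  have hsum : ∑ β, c β * (if pCond β i l then 1 else 0) = 0 := by
    have := congrFun (congrFun hc l) i
    simpa [Matrix.sum_apply, pOp] using this
  rw [Finset.sum_eq_single α] at hsum
  · simpa [(pCond_iff_refines h α).2 (le_refl α)] using hsum
  · intro β _ hβ
    by_cases hle : pCond β i l
    · have : β < α := lt_of_le_of_ne ((pCond_iff_refines h β).1 hle) hβ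
      simp [ih β this]
    · simp [hle]
  · simp

theorem not_linearIndependent_pOp {n : ℕ} (hnk : n < k) : ¬ LinearIndependent ℂ (pOp n k) := by
  classical
  let _ := Fintype.ofFinite (PDualSym k)
  -- pairing with the columns of the zeta matrix other than that of the identity
  let L : (PDualSym k → ℂ) →ₗ[ℂ] ({α : PDualSym k // α ≠ identity k} → ℂ) :=
    Matrix.mulVecLin (Matrix.of fun α β => if Refines β α.1 then 1 else 0)
  have hcard : Fintype.card {α : PDualSym k // α ≠ identity k} < Fintype.card (PDualSym k) :=
    Fintype.card_subtype_lt (x := identity k) (by simp)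
  have hker : L.ker ≠ ⊥ := LinearMap.ker_ne_bot_of_finrank_lt (by simpa using hcard)
  obtain ⟨c, hcL, hc0⟩ := (Submodule.ne_bot_iff _).1 hker
  intro hli
  rw [Fintype.linearIndependent_iff] at hli
  refine hc0 (funext (hli c ?_))
  ext l i
  have hgoal : ∑ β, c β * (if pCond β i l then 1 else 0) = 0 := by
    by_cases hex : ∃ β : PDualSym k, pCond β i l
    · obtain ⟨β₀, hβ₀⟩ := hex
      obtain ⟨α, hα⟩ := exists_isKernel hβ₀
      have hne : α ≠ identity k := by
        rintro rfl
        exact not_isKernel_identity hnk _ hα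
      have := congrFun (LinearMap.mem_ker.1 hcL) ⟨α, hne⟩
      simpa [L, Matrix.mulVec, dotProduct, pCond_iff_refines hα] using this
    · push Not at hex
      simp [hex]
  simpa [Matrix.sum_apply, pOp] using hgoal

end PDualSym

/-- The representation of ℂ[PI*_k] on U^{⊗k} is faithful iff k ≤ n: the
operators induced by the elements of PI*_k are linearly independent iff k ≤ n. -/
theorem pdualSym_algebra_faithful_iff (n k : ℕ) (hn : 0 < n) (hk : 0 < k) :
    LinearIndependent ℂ (pOp n k) ↔ k ≤ n := by
  refine ⟨fun h => ?_, PDualSym.linearIndependent_pOp⟩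
  by_contra hkn
  exact PDualSym.not_linearIndependent_pOp (not_le.1 hkn) h
end

section
/- For every α ∈ PI*_k (viewed as an element of the deformed semigroup of Vernitski) and every i ∈ ({0} ∪ N)^k, the bullet action satisfies α • v_i = Σ_{β ⊢ α} (β ⋆ v_i), the sum being over all β ∈ PI*_k such that every block of β is a block of α. (This says α • v_i = ψ(α) ⋆ v_i for the isomorphism ψ: α ↦ Σ_{β ⊢ α} β.) -/
/-!
Compare the coefficients of `v_l` on both sides. Glue `i` and `l` to a labelling of `K̃`. If
`β` satisfies the ⋆-condition, then its domain is the set of points with nonzero label and its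
blocks are the classes of equal label there, so `β` is determined by `(i, l)`
(`starCond_rel_iff`). If moreover `β ⊢ α`, then `α` satisfies the •-condition
(`bulletCond_of_starCond`); conversely, under the •-condition the blocks of `α` with nonzero
label form such a `β` (`PDualSym.support`). Hence the sum over `β ⊢ α` has exactly one nonzero
coefficient, equal to `1`, when the •-condition holds, and none otherwise.
-/

open scoped BigOperators

/-- The condition defining the ⋆-action of α ∈ PI*_k: the labelling of K̃ given
by i on K and l on K' is constant and nonzero (≠ `none`) on each block of α,
distinct blocks of α get distinct values, and the value is 0 (=`none`) outside
the domain of α. -/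
def starCond {n k : ℕ} (α : PDualSym k) (i l : Fin k → Option (Fin n)) : Prop :=
  (∀ x y, α.rel x y → Sum.elim i l x = Sum.elim i l y) ∧
  (∀ x, α.rel x x → Sum.elim i l x ≠ none) ∧
  (∀ x y, α.rel x x → α.rel y y → Sum.elim i l x = Sum.elim i l y → α.rel x y) ∧
  (∀ x, ¬ α.rel x x → Sum.elim i l x = none)

open Classical in
/-- The ⋆-operator on U^{⊗k} attached to α ∈ PI*_k: α ⋆ v_i = v_l when
`starCond α i l` holds for (the necessarily unique) l, and α ⋆ v_i = 0 otherwise. -/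
noncomputable def starOp (n k : ℕ) (α : PDualSym k) :
    Matrix (Fin k → Option (Fin n)) (Fin k → Option (Fin n)) ℂ :=
  Matrix.of fun l i => if starCond α i l then 1 else 0

/-- β ⪰ α : β is a partition of the same subset of K̃ as α and every block of β
is a union of blocks of α. -/
def PGe {k : ℕ} (β α : PDualSym k) : Prop :=
  (∀ x y, α.rel x y → β.rel x y) ∧ (∀ x, β.rel x x → α.rel x x)

/-- The condition defining the •-action of α ∈ PI*_k: the labelling of K̃ given
by i on K and l on K' is constant on each block of α, distinct blocks of α with
nonzero values get distinct values, and the value is 0 (=`none`) outside the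
domain of α. -/
def bulletCond {n k : ℕ} (α : PDualSym k) (i l : Fin k → Option (Fin n)) : Prop :=
  (∀ x y, α.rel x y → Sum.elim i l x = Sum.elim i l y) ∧
  (∀ x y, α.rel x x → α.rel y y → Sum.elim i l x = Sum.elim i l y →
      Sum.elim i l x ≠ none → α.rel x y) ∧
  (∀ x, ¬ α.rel x x → Sum.elim i l x = none)

open Classical in
/-- The •-operator on U^{⊗k} attached to α ∈ PI*_k. -/
noncomputable def bulletOp (n k : ℕ) (α : PDualSym k) :
    Matrix (Fin k → Option (Fin n)) (Fin k → Option (Fin n)) ℂ :=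
  Matrix.of fun l i => if bulletCond α i l then 1 else 0

/-- β ⊢ α : every block of β is a block of α. -/
def PSub {k : ℕ} (β α : PDualSym k) : Prop :=
  (∀ x y, β.rel x y → α.rel x y) ∧ (∀ x y, β.rel x x → α.rel x y → β.rel x y)

theorem starCond_rel_iff {n k : ℕ} {β : PDualSym k} {i l : Fin k → Option (Fin n)}
    (h : starCond β i l) (x y : Fin k ⊕ Fin k) :
    β.rel x y ↔ Sum.elim i l x ≠ none ∧ Sum.elim i l x = Sum.elim i l y := by
  obtain ⟨h1, h2, h3, h4⟩ := h
  constructor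
  · intro hxy
    exact ⟨h2 x (β.trans hxy (β.symm hxy)), h1 x y hxy⟩
  · rintro ⟨hx, hxy⟩
    refine h3 x y ?_ ?_ hxy
    · by_contra hc
      exact hx (h4 x hc)
    · by_contra hc
      exact hx (hxy.trans (h4 y hc))

theorem starCond_unique {n k : ℕ} {β γ : PDualSym k} {i l : Fin k → Option (Fin n)}
    (hβ : starCond β i l) (hγ : starCond γ i l) : β = γ := by
  have h : β.rel = γ.rel := by
    funext x y
    exact propext ((starCond_rel_iff hβ x y).trans (starCond_rel_iff hγ x y).symm)
  cases β
  cases γ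
  simpa using h

theorem bulletCond_of_starCond {n k : ℕ} {α β : PDualSym k} {i l : Fin k → Option (Fin n)}
    (hβα : PSub β α) (h : starCond β i l) : bulletCond α i l := by
  have hrel := starCond_rel_iff h
  obtain ⟨h1, -, -, h4⟩ := h
  refine ⟨fun x y hxy => ?_, fun x y _ _ he hne => hβα.1 x y ((hrel x y).2 ⟨hne, he⟩),
    fun x hx => h4 x fun hc => hx (hβα.1 x x hc)⟩
  by_cases hx : β.rel x x
  · exact h1 x y (hβα.2 x y hx hxy)
  by_cases hy : β.rel y y
  · exact (h1 y x (hβα.2 y x hy (α.symm hxy))).symm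
  · rw [h4 x hx, h4 y hy]

/-- The element of `PI*_k` whose blocks are those blocks of `α` on which a labelling `f`,
constant on the blocks of `α`, is nonzero. -/
def PDualSym.support {n k : ℕ} (α : PDualSym k) (f : Fin k ⊕ Fin k → Option (Fin n))
    (hf : ∀ x y, α.rel x y → f x = f y) : PDualSym k where
  rel x y := α.rel x y ∧ f x ≠ none
  symm := fun {x y} h => ⟨α.symm h.1, hf x y h.1 ▸ h.2⟩
  trans := fun h h' => ⟨α.trans h.1 h'.1, h.2⟩
  meetsL := fun x h => (α.meetsL x h.1).imp fun _ ha => ⟨ha, h.2⟩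
  meetsR := fun x h => (α.meetsR x h.1).imp fun _ hb => ⟨hb, h.2⟩

theorem exists_starCond_of_bulletCond {n k : ℕ} {α : PDualSym k}
    {i l : Fin k → Option (Fin n)} (h : bulletCond α i l) :
    ∃ β : PDualSym k, PSub β α ∧ starCond β i l := by
  obtain ⟨h1, h2, h3⟩ := h
  refine ⟨α.support (Sum.elim i l) h1,
    ⟨fun x y hxy => hxy.1, fun x y hx hxy => ⟨hxy, hx.2⟩⟩,
    fun x y hxy => h1 x y hxy.1, fun x hx => hx.2,
    fun x y hx hy he => ⟨h2 x y hx.1 hy.1 he hx.2, hx.2⟩, fun x hx => ?_⟩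
  by_contra hne
  exact hx ⟨by_contra fun hc => hne (h3 x hc), hne⟩

/-- The •-action of α ∈ PI*_k on a basis vector of U^{⊗k} is the sum of the
⋆-actions of all β ⊢ α (so α • v_i = ψ(α) ⋆ v_i for the isomorphism
ψ : α ↦ ∑_{β ⊢ α} β). -/
theorem bullet_eq_finsum_star (n k : ℕ) (hn : 0 < n) (hk : 0 < k)
    (α : PDualSym k) (i : Fin k → Option (Fin n)) :
    (bulletOp n k α).mulVec (Pi.single i 1) =
      ∑ᶠ β : {β : PDualSym k // PSub β α},
        (starOp n k β.val).mulVec (Pi.single i 1) := by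
  classical
  have := Fintype.ofFinite {β : PDualSym k // PSub β α}
  rw [finsum_eq_sum_of_fintype]
  funext l
  simp only [Finset.sum_apply, Matrix.mulVec_single_one, Matrix.col_apply, bulletOp, starOp,
    Matrix.of_apply]
  by_cases h : bulletCond α i l
  · obtain ⟨β, hβα, hβ⟩ := exists_starCond_of_bulletCond h
    rw [if_pos h, Finset.sum_eq_single ⟨β, hβα⟩, if_pos hβ]
    · exact fun γ _ hγ => if_neg fun hc => hγ (Subtype.ext (starCond_unique hc hβ))
    · exact fun hc => absurd (Finset.mem_univ _) hc
  · rw [if_neg h]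
    exact (Finset.sum_eq_zero fun β _ => if_neg fun hc =>
      h (bulletCond_of_starCond β.2 hc)).symm
end

section
/- Let ε_n ∈ IS_n be the idempotent rook matrix that is the diagonal matrix with entries 1 in positions 1,...,n−1 and 0 in position n (i.e., the identity map of the subset {1,...,n−1} of N). Then for every α ∈ I*_k, the operator of ε_n (acting diagonally on V^{⊗k}) commutes with the operator of α on V^{⊗k}: ε_n ∘ α = α ∘ ε_n as linear endomorphisms of V^{⊗k}. -/
/-!
The tensor power of the diagonal matrix `ε_n` is again diagonal (`tpow_diagonal`): on `v_i` it is
`1` if no entry of `i` is the last index and `0` otherwise. If the `(l, i)` entry of the operator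
of `α` is nonzero, then the labelling given by `i` on `K` and `l` on `K'` is constant on blocks, and
since every block meets both `K` and `K'`, the tuples `i` and `l` have the same set of entries. Hence
the diagonal entries at `l` and at `i` agree, so the two products agree entry by entry.
-/

open scoped BigOperators

/-- The idempotent ε_n ∈ IS_n: the diagonal rook matrix with entries 1 in
positions 1,…,n-1 and 0 in the last position (the identity of {1,…,n-1}). -/
noncomputable def epsMat (n : ℕ) : Matrix (Fin n) (Fin n) ℂ :=
  Matrix.diagonal (fun i => if (i : ℕ) = n - 1 then 0 else 1)

/-- The tensor power of a diagonal matrix is diagonal. -/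
lemma tpow_diagonal (k : ℕ) {m : Type} [Fintype m] [DecidableEq m] (d : m → ℂ) :
    tpow k (Matrix.diagonal d) = Matrix.diagonal fun i : Fin k → m => ∏ t, d (i t) := by
  ext l i
  by_cases h : l = i
  · subst h
    simp [tpow]
  · obtain ⟨t, ht⟩ := Function.ne_iff.mp h
    rw [Matrix.diagonal_apply_ne _ h]
    exact Finset.prod_eq_zero (Finset.mem_univ t) (Matrix.diagonal_apply_ne _ ht)

/-- Tuples compatible with `α` have the same entries, because every block of `α` meets both `K` and
`K'`. -/
lemma DualSym.range_eq {k : ℕ} {m : Type} (α : DualSym k) {l i : Fin k → m}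
    (h : ∀ x y, α.rel x y → Sum.elim i l x = Sum.elim i l y) :
    Set.range l = Set.range i := by
  apply Set.Subset.antisymm
  · rintro _ ⟨b, rfl⟩
    obtain ⟨a, ha⟩ := α.meetsL (Sum.inr b)
    exact ⟨a, (h _ _ ha).symm⟩
  · rintro _ ⟨a, rfl⟩
    obtain ⟨b, hb⟩ := α.meetsR (Sum.inl a)
    exact ⟨b, (h _ _ hb).symm⟩

/-- The diagonal entry of `ε_n^{⊗k}` at `i` depends only on whether the last index is an entry of
`i`. -/
lemma prod_eps_eq_of_range_eq {n k : ℕ} {l i : Fin k → Fin n} (h : Set.range l = Set.range i) :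
    (∏ t, if (l t : ℕ) = n - 1 then (0 : ℂ) else 1) =
      ∏ t, if (i t : ℕ) = n - 1 then (0 : ℂ) else 1 := by
  have key : ∀ j : Fin k → Fin n, (∏ t, if (j t : ℕ) = n - 1 then (0 : ℂ) else 1) = 0 ↔
      ∃ x ∈ Set.range j, (x : ℕ) = n - 1 := by
    intro j
    simp [Finset.prod_eq_zero_iff]
  have one : ∀ j : Fin k → Fin n, (∏ t, if (j t : ℕ) = n - 1 then (0 : ℂ) else 1) ≠ 0 →
      (∏ t, if (j t : ℕ) = n - 1 then (0 : ℂ) else 1) = 1 := by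
    intro j hj
    refine Finset.prod_eq_one fun t ht => ?_
    have := Finset.prod_ne_zero_iff.mp hj t ht
    simp_all
  by_cases hl : (∏ t, if (l t : ℕ) = n - 1 then (0 : ℂ) else 1) = 0
  · rw [hl, (key i).mpr (h ▸ (key l).mp hl)]
  · rw [one l hl, one i fun hi => hl ((key l).mpr (h ▸ (key i).mp hi))]

/-- The diagonal action of ε_n on V^{⊗k} commutes with the action of every
α ∈ I*_k. -/
theorem eps_commutes_with_dualSym (n k : ℕ) (hn : 0 < n) (hk : 0 < k)
    (α : DualSym k) :
    tpow k (epsMat n) * dualOp n k α = dualOp n k α * tpow k (epsMat n) := by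
  ext l i
  rw [epsMat, tpow_diagonal, Matrix.diagonal_mul, Matrix.mul_diagonal, mul_comm]
  by_cases h : ∀ x y, α.rel x y → Sum.elim i l x = Sum.elim i l y
  · rw [prod_eps_eq_of_range_eq (α.range_eq h)]
  · have h0 : dualOp n k α l i = 0 := if_neg h
    rw [h0, zero_mul, zero_mul]
end

section
/- For every positive integer n, the natural representation V = ℂ^n of the symmetric inverse semigroup IS_n is irreducible: the only subspaces of V invariant under the action of every element of IS_n are 0 and V. -/
/-!
A nonzero invariant subspace contains some `v` with `v j ≠ 0`. The matrix unit `E i j` is a rook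
matrix and sends `v` to `v j • e_i`, so the subspace contains every standard basis vector `e_i`.
-/

open scoped BigOperators

theorem isRook_single {n : ℕ} (i j : Fin n) : IsRook (Matrix.single i j (1 : ℂ)) := by
  refine ⟨fun a b => ?_, fun a b b' h h' => ?_, fun a a' b h h' => ?_⟩ <;>
    simp only [Matrix.single_apply] at * <;> grind

/-- The natural representation V = ℂⁿ of IS_n is irreducible: the only
IS_n-invariant subspaces of V are 0 and V. -/
theorem isn_natural_rep_irreducible (n : ℕ) (hn : 0 < n)
    (W : Submodule ℂ (Fin n → ℂ))
    (hW : ∀ σ : RookMonoid n, ∀ v ∈ W, σ.val.mulVec v ∈ W) :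
    W = ⊥ ∨ W = ⊤ := by
  refine or_iff_not_imp_left.mpr fun hbot => ?_
  obtain ⟨v, hv, hv0⟩ := W.exists_mem_ne_zero_of_ne_bot hbot
  obtain ⟨j, hj⟩ := Function.ne_iff.mp hv0
  have hj' : v j ≠ 0 := hj
  have basis_mem : ∀ i, (Pi.single i 1 : Fin n → ℂ) ∈ W := by
    intro i
    have h := W.smul_mem (v j)⁻¹ (hW ⟨_, isRook_single i j⟩ v hv)
    convert h using 1
    ext k
    by_cases hk : k = i
    · subst hk
      simp [hj', Matrix.single_mulVec]
    · simp [hk, Matrix.single_mulVec]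
  refine eq_top_iff.mpr fun w _ => ?_
  rw [pi_eq_sum_univ' w]
  exact W.sum_mem fun i _ => W.smul_mem _ (by simpa [Pi.single_apply, funext_iff, eq_comm, Pi.single] using basis_mem i)
end
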